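/- arXiv:1511.07306 — 2 statements merged into one kernel-verified Lean document; each statement's English description precedes it below -/
import Mathlib

section
/- Let ℓ ≥ 2, m ≥ 9 and n ≥ m² − m + 1 be integers and let T be any tree on n vertices. Then every graph G on ℓ(n − 1) + 1 vertices either contains the graph K_{ℓ−1} + mK_2 as a subgraph or its complement contains T as a subgraph. (This is the upper bound direction of the equality R(T, K_{ℓ−1} + mK_2) = ℓ(n − 1) + 1.) -/
/-- `Contains G H` means `G` contains a subgraph isomorphic to `H`, i.e. there is an
injective map on vertices preserving adjacency. -/
def Contains {α β : Type*} (G : SimpleGraph α) (H : SimpleGraph β) : Prop :=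
  ∃ f : β → α, Function.Injective f ∧ ∀ ⦃u v⦄, H.Adj u v → G.Adj (f u) (f v)

/-- The join `K_l + mK_2`: a complete graph on `l` vertices joined to a disjoint union of
`m` edges.  (For `l = 1` this is the fan `F_m`.) -/
def cliqueJoinMatching (l m : ℕ) : SimpleGraph (Fin l ⊕ Fin m × Bool) :=
  SimpleGraph.fromRel (fun x y =>
    (∃ a, x = Sum.inl a) ∨ ∃ i : Fin m, x = Sum.inr (i, true) ∧ y = Sum.inr (i, false))

section Main
open Classical

variable {V W : Type*}

/-- `HasM G S q`: the graph `G` has a matching of size `q` inside `S`. -/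
noncomputable def HasM (G : SimpleGraph W) : Finset W → ℕ → Prop
  | _, 0 => True
  | S, q + 1 => ∃ a ∈ S, ∃ b ∈ S, G.Adj a b ∧ HasM G ((S.erase a).erase b) q

lemma HasM.mono {G : SimpleGraph W} {q : ℕ} : ∀ {S S' : Finset W}, S ⊆ S' → HasM G S q → HasM G S' q := by
  induction q with
  | zero => intro S S' _ _; trivial
  | succ q ih =>
    rintro S S' h ⟨a, ha, b, hb, hab, hM⟩
    exact ⟨a, h ha, b, h hb, hab, ih (Finset.erase_subset_erase _ (Finset.erase_subset_erase _ h)) hM⟩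

lemma HasM.union {G : SimpleGraph W} {p q : ℕ} : ∀ {S S' : Finset W}, Disjoint S S' → HasM G S p →
    HasM G S' q → HasM G (S ∪ S') (p + q) := by
  induction p with
  | zero => intro S S' _ _ h; rw [Nat.zero_add]; exact h.mono Finset.subset_union_right
  | succ p ih =>
    rintro S S' hd ⟨a, ha, b, hb, hab, hM⟩ h'
    rw [Nat.add_right_comm]
    refine ⟨a, Finset.mem_union_left _ ha, b, Finset.mem_union_left _ hb, hab, ?_⟩
    refine HasM.mono ?_ (ih (S := (S.erase a).erase b) (S' := S') ?_ hM h')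
    · intro x hx
      have := Finset.disjoint_left.1 hd
      simp only [Finset.mem_union, Finset.mem_erase] at hx ⊢
      rcases hx with ⟨h1, h2, h3⟩ | hx
      · exact ⟨h1, h2, Or.inl h3⟩
      · exact ⟨fun h => this hb (h ▸ hx), fun h => this ha (h ▸ hx), Or.inr hx⟩
    · exact hd.mono_left ((Finset.erase_subset _ _).trans (Finset.erase_subset _ _))

lemma HasM.sub {G : SimpleGraph W} {q : ℕ} : ∀ {S : Finset W}, HasM G S q →
    ∃ S' ⊆ S, S'.card = 2 * q ∧ HasM G S' q := by
  induction q with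
  | zero => intro S _; exact ⟨∅, by simp, by simp, trivial⟩
  | succ q ih =>
    rintro S ⟨a, ha, b, hb, hab, hM⟩
    obtain ⟨S', hS, hc, hM'⟩ := ih hM
    have hbS : b ∉ S' := fun h => by simpa using hS h
    have haS : a ∉ insert b S' := by
      intro h
      rcases Finset.mem_insert.1 h with h | h
      · exact hab.ne h
      · simpa using hS h
    refine ⟨insert a (insert b S'), ?_, ?_, ?_⟩
    · intro x hx
      simp only [Finset.mem_insert] at hx
      rcases hx with rfl | rfl | hx
      · exact ha
      · exact hb
      · have := hS hx
        simp only [Finset.mem_erase] at this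
        exact this.2.2
    · rw [Finset.card_insert_of_notMem haS, Finset.card_insert_of_notMem hbS, hc]; ring
    · refine ⟨a, by simp, b, by simp, hab, ?_⟩
      rw [Finset.erase_insert haS, Finset.erase_insert hbS]; exact hM'

lemma hasM_greedy {G : SimpleGraph W} (B : Finset W) : ∀ C : Finset W, Disjoint B C →
    (∀ b ∈ B, B.card ≤ (C.filter (G.Adj b)).card) → HasM G (B ∪ C) B.card := by
  induction B using Finset.induction_on with
  | empty => intro C _ _; trivial
  | insert b B hb ih =>
    intro C hd h
    rw [Finset.card_insert_of_notMem hb] at h ⊢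
    have hpos : 0 < (C.filter (G.Adj b)).card := by
      have := h b (by simp); omega
    obtain ⟨c, hc⟩ := Finset.card_pos.1 hpos
    rw [Finset.mem_filter] at hc
    have hd' := Finset.disjoint_left.1 hd
    refine ⟨b, by simp, c, by simp [hc.1], hc.2, ?_⟩
    refine HasM.mono ?_ (ih (C.erase c) ?_ ?_)
    · intro x hx
      simp only [Finset.mem_union, Finset.mem_erase, Finset.mem_insert] at hx ⊢
      rcases hx with hx | ⟨h1, h2⟩
      · exact ⟨fun e => hd' (Finset.mem_insert_of_mem (e ▸ hx)) hc.1, fun e => hb (e ▸ hx), Or.inl (Or.inr hx)⟩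
      · exact ⟨h1, fun e => hd' (Finset.mem_insert_self _ _) (e ▸ h2), Or.inr h2⟩
    · exact (hd.mono_left (Finset.subset_insert _ _)).mono_right (Finset.erase_subset _ _)
    · intro b' hb'
      have := h b' (by simp [hb'])
      rw [Finset.filter_erase]
      have := Finset.pred_card_le_card_erase (s := C.filter (G.Adj b')) (a := c)
      omega

lemma exists_indep {G : SimpleGraph W} {q : ℕ} : ∀ {S : Finset W}, ¬ HasM G S (q + 1) →
    ∃ J ⊆ S, (∀ a ∈ J, ∀ b ∈ J, ¬ G.Adj a b) ∧ S.card ≤ J.card + 2 * q := by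
  induction q with
  | zero =>
    intro S h
    refine ⟨S, subset_rfl, fun a ha b hb hab => h ⟨a, ha, b, hb, hab, trivial⟩, by simp⟩
  | succ q ih =>
    intro S h
    by_cases hi : ∀ a ∈ S, ∀ b ∈ S, ¬ G.Adj a b
    · exact ⟨S, subset_rfl, hi, by omega⟩
    · push Not at hi
      obtain ⟨a, ha, b, hb, hab⟩ := hi
      obtain ⟨J, hJ, hi, hc⟩ := ih (S := (S.erase a).erase b) (fun hM => h ⟨a, ha, b, hb, hab, hM⟩)
      refine ⟨J, hJ.trans ((Finset.erase_subset _ _).trans (Finset.erase_subset _ _)), hi, ?_⟩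
      have h1 := Finset.pred_card_le_card_erase (s := S) (a := a)
      have h2 := Finset.pred_card_le_card_erase (s := S.erase a) (a := b)
      omega

lemma HasM.toFun {G : SimpleGraph W} {q : ℕ} : ∀ {S : Finset W}, HasM G S q →
    ∃ f : Fin q × Bool → W, Function.Injective f ∧ (∀ x, f x ∈ S) ∧
      ∀ i, G.Adj (f (i, true)) (f (i, false)) := by
  induction q with
  | zero => intro S _; exact ⟨fun x => x.1.elim0, fun x => x.1.elim0, fun x => x.1.elim0, fun x => x.elim0⟩
  | succ q ih =>
    rintro S ⟨a, ha, b, hb, hab, hM⟩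
    obtain ⟨f, hf, hS, hadj⟩ := ih hM
    have hS' : ∀ x, f x ≠ b ∧ f x ≠ a ∧ f x ∈ S := fun x => by
      have := hS x
      simpa only [Finset.mem_erase] using this
    refine ⟨fun x => Fin.cases (if x.2 then a else b) (fun i => f (i, x.2)) x.1, ?_, ?_, ?_⟩
    · rintro ⟨i, x⟩ ⟨j, y⟩
      refine Fin.cases ?_ (fun i => ?_) i <;> refine Fin.cases ?_ (fun j => ?_) j
      · have := hab.ne
        cases x <;> cases y <;> simp [this, this.symm]
      · have := hS' (j, y)
        cases x <;> simp [this.1.symm, this.2.1.symm]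
      · have := hS' (i, x)
        cases y <;> simp [this.1, this.2.1]
      · simp only [Fin.cases_succ]
        intro h
        have := hf h
        simp only [Prod.mk.injEq] at this ⊢
        exact ⟨by rw [this.1], this.2⟩
    · rintro ⟨i, x⟩
      refine Fin.cases ?_ (fun i => ?_) i
      · cases x <;> simp [ha, hb]
      · exact (hS' (i, x)).2.2
    · intro i
      refine Fin.cases ?_ (fun i => ?_) i
      · simpa using hab
      · exact hadj i

/-- number of `G`-neighbours of `w` in `S` -/
noncomputable def dg (G : SimpleGraph W) (w : W) (S : Finset W) : ℕ := (S.filter (G.Adj w)).card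

lemma dg_mono {G : SimpleGraph W} {w : W} {S S' : Finset W} (h : S ⊆ S') : dg G w S ≤ dg G w S' :=
  Finset.card_le_card (Finset.filter_subset_filter _ h)

lemma dg_compl_notMem {G : SimpleGraph W} {w : W} {S : Finset W} (h : w ∉ S) :
    dg G w S + dg Gᶜ w S = S.card := by
  have : dg Gᶜ w S = (S.filter (fun x => ¬ G.Adj w x)).card := by
    unfold dg
    congr 1
    ext x
    simp only [Finset.mem_filter, SimpleGraph.compl_adj]
    exact ⟨fun h => ⟨h.1, h.2.2⟩, fun h' => ⟨h'.1, fun e => h (e ▸ h'.1), h'.2⟩⟩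
  rw [this]
  exact Finset.card_filter_add_card_filter_not _

lemma dg_erase {G : SimpleGraph W} {w : W} {S : Finset W} : dg G w (S.erase w) = dg G w S := by
  unfold dg
  rw [Finset.filter_erase, Finset.erase_eq_of_notMem]
  simp

lemma dg_compl_mem {G : SimpleGraph W} {w : W} {S : Finset W} (h : w ∈ S) :
    dg G w S + dg Gᶜ w S + 1 = S.card := by
  have := dg_compl_notMem (G := G) (Finset.notMem_erase w S)
  rw [dg_erase, dg_erase, Finset.card_erase_of_mem h] at this
  have := Finset.card_pos.2 ⟨w, h⟩
  omega

lemma dg_union {G : SimpleGraph W} {w : W} {S S' : Finset W} (h : Disjoint S S') :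
    dg G w (S ∪ S') = dg G w S + dg G w S' := by
  unfold dg
  rw [Finset.filter_union, Finset.card_union_of_disjoint]
  exact Finset.disjoint_filter_filter h

lemma dg_le {G : SimpleGraph W} {w : W} {S : Finset W} : dg G w S ≤ S.card := Finset.card_filter_le _ _

/-- injection extension -/
lemma ext_inj (A A0 : Finset V) (B : Finset W) (φ : V → W) (h0 : A0 ⊆ A) (hinj : Set.InjOn φ A0)
    (hB : ∀ a ∈ A0, φ a ∈ B) (hc : A.card ≤ B.card) :
    ∃ ψ : V → W, (∀ a ∈ A0, ψ a = φ a) ∧ Set.InjOn ψ A ∧ ∀ a ∈ A, ψ a ∈ B := by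
  have him : A0.image φ ⊆ B := by
    intro x hx
    obtain ⟨a, ha, rfl⟩ := Finset.mem_image.1 hx
    exact hB a ha
  have hcard : Fintype.card ↥(A \ A0) ≤ Fintype.card ↥(B \ A0.image φ) := by
    rw [Fintype.card_coe, Fintype.card_coe, Finset.card_sdiff_of_subset h0, Finset.card_sdiff_of_subset him,
      Finset.card_image_of_injOn hinj]
    omega
  obtain ⟨e⟩ := Function.Embedding.nonempty_of_card_le hcard
  refine ⟨fun a => if h : a ∈ A \ A0 then (e ⟨a, h⟩ : W) else φ a, ?_, ?_, ?_⟩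
  · intro a ha
    simp [ha]
  · intro a ha b hb hab
    simp only at hab
    by_cases h1 : a ∈ A \ A0 <;> by_cases h2 : b ∈ A \ A0
    · rw [dif_pos h1, dif_pos h2] at hab
      have := e.injective (Subtype.ext hab)
      simpa using this
    · rw [dif_pos h1, dif_neg h2] at hab
      have hb0 : b ∈ A0 := by
        by_contra hh; exact h2 (Finset.mem_sdiff.2 ⟨hb, hh⟩)
      have := (Finset.mem_sdiff.1 (e ⟨a, h1⟩).2).2
      exact absurd (hab ▸ Finset.mem_image_of_mem φ hb0) this
    · rw [dif_neg h1, dif_pos h2] at hab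
      have hb0 : a ∈ A0 := by
        by_contra hh; exact h1 (Finset.mem_sdiff.2 ⟨ha, hh⟩)
      have := (Finset.mem_sdiff.1 (e ⟨b, h2⟩).2).2
      exact absurd (hab ▸ Finset.mem_image_of_mem φ hb0) this
    · rw [dif_neg h1, dif_neg h2] at hab
      have ha0 : a ∈ A0 := by
        by_contra hh; exact h1 (Finset.mem_sdiff.2 ⟨ha, hh⟩)
      have hb0 : b ∈ A0 := by
        by_contra hh; exact h2 (Finset.mem_sdiff.2 ⟨hb, hh⟩)
      exact hinj ha0 hb0 hab
  · intro a ha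
    by_cases h1 : a ∈ A \ A0
    · simp only [dif_pos h1]
      exact (Finset.mem_sdiff.1 (e ⟨a, h1⟩).2).1
    · simp only [dif_neg h1]
      apply hB
      by_contra hh; exact h1 (Finset.mem_sdiff.2 ⟨ha, hh⟩)

/-- noniso count -/
lemma noniso {G : SimpleGraph W} {k q : ℕ} : ∀ {S : Finset W}, (∀ x ∈ S, dg G x S ≤ k) →
    ¬ HasM G S (q + 1) → (S.filter (fun x => ∃ y ∈ S, G.Adj x y)).card ≤ (k + 1) * q := by
  induction q with
  | zero =>
    intro S _ h
    rw [Nat.mul_zero, Nat.le_zero, Finset.card_eq_zero, Finset.filter_eq_empty_iff]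
    rintro x hx ⟨y, hy, hxy⟩
    exact h ⟨x, hx, y, hy, hxy, trivial⟩
  | succ q ih =>
    intro S hk h
    by_cases he : ∃ x ∈ S, ∃ y ∈ S, G.Adj x y
    swap
    · have : S.filter (fun x => ∃ y ∈ S, G.Adj x y) = ∅ := by
        rw [Finset.filter_eq_empty_iff]
        intro x hx hy
        exact he ⟨x, hx, hy⟩
      rw [this]; simp
    -- choose edge
    have key : ∃ a ∈ S, ∃ b ∈ S, G.Adj a b ∧ ∀ v ∈ S, v ≠ a → (∃ y ∈ S, G.Adj v y) →
        (∀ y ∈ S, G.Adj v y → y = a ∨ y = b) → G.Adj a v := by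
      by_cases hl : ∃ l ∈ S, ∃ a ∈ S, G.Adj a l ∧ ∀ y ∈ S, G.Adj l y → y = a
      · obtain ⟨l, hlS, a, ha, hal, hu⟩ := hl
        refine ⟨a, ha, l, hlS, hal, ?_⟩
        rintro v hv hva ⟨y, hy, hvy⟩ hall
        rcases hall y hy hvy with rfl | rfl
        · exact hvy.symm
        · exact absurd (hu v hv hvy.symm) hva
      · push Not at hl
        obtain ⟨a, ha, b, hb, hab⟩ := he
        refine ⟨a, ha, b, hb, hab, ?_⟩
        rintro v hv hva ⟨y, hy, hvy⟩ hall
        rcases hall y hy hvy with rfl | rfl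
        · exact hvy.symm
        · obtain ⟨z, hz, hvz, hzy⟩ := hl v hv y hy hvy.symm
          rcases hall z hz hvz with rfl | rfl
          · exact hvz.symm
          · exact absurd rfl hzy
    obtain ⟨a, ha, b, hb, hab, hkey⟩ := key
    set S' := (S.erase a).erase b with hS'
    have hS'S : S' ⊆ S := (Finset.erase_subset _ _).trans (Finset.erase_subset _ _)
    have h1 := ih (S := S') (fun x hx => (dg_mono hS'S).trans (hk x (hS'S hx)))
      (fun hM => h ⟨a, ha, b, hb, hab, hM⟩)
    have hsub : S.filter (fun x => ∃ y ∈ S, G.Adj x y) ⊆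
        S'.filter (fun x => ∃ y ∈ S', G.Adj x y) ∪ insert a (S.filter (G.Adj a)) := by
      intro x hx
      rw [Finset.mem_filter] at hx
      rw [Finset.mem_union, Finset.mem_insert, Finset.mem_filter, Finset.mem_filter]
      by_cases hxa : x = a
      · exact Or.inr (Or.inl hxa)
      by_cases hax : G.Adj a x
      · exact Or.inr (Or.inr ⟨hx.1, hax⟩)
      left
      have hxb : x ≠ b := fun e => hax (e ▸ hab)
      refine ⟨by simp [hS', hxa, hxb, hx.1], ?_⟩
      by_contra hno
      apply hax
      apply hkey x hx.1 hxa hx.2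
      intro y hy hxy
      by_contra hcon
      push Not at hcon
      exact hno ⟨y, by simp [hS', hcon.1, hcon.2, hy], hxy⟩
    have h2 := Finset.card_le_card hsub
    have h3 := Finset.card_union_le (S'.filter (fun x => ∃ y ∈ S', G.Adj x y)) (insert a (S.filter (G.Adj a)))
    have h4 := Finset.card_insert_le a (S.filter (G.Adj a))
    have h5 : (S.filter (G.Adj a)).card ≤ k := hk a ha
    rw [Nat.mul_succ]
    omega
end Main

section Main
open Classical

variable {V W : Type*}

/-- `S` is a clique of `H` -/
def Clq (H : SimpleGraph W) (S : Finset W) : Prop := ∀ a ∈ S, ∀ b ∈ S, a ≠ b → H.Adj a b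

lemma Clq.mono {H : SimpleGraph W} {S S' : Finset W} (h : Clq H S) (h' : S' ⊆ S) : Clq H S' :=
  fun a ha b hb => h a (h' ha) b (h' hb)

lemma two_stage (w : W) (A A0 : Finset V) (B B0 : Finset W) (hA : A0 ⊆ A) (hB : B0 ⊆ B)
    (h0 : A0.card ≤ B0.card) (h1 : A.card ≤ B.card) :
    ∃ ψ : V → W, Set.InjOn ψ A ∧ (∀ a ∈ A, ψ a ∈ B) ∧ ∀ a ∈ A0, ψ a ∈ B0 := by
  obtain ⟨φ, -, hi, hm⟩ := ext_inj A0 ∅ B0 (fun _ => w) (by simp) (by simp) (by simp) h0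
  obtain ⟨ψ, he, hi', hm'⟩ := ext_inj A A0 B φ hA hi (fun a ha => hB (hm a ha)) h1
  exact ⟨ψ, hi', hm', fun a ha => by rw [he a ha]; exact hm a ha⟩

lemma clique_contains [Fintype V] [Nonempty V] {T : SimpleGraph V} {H : SimpleGraph W} {I : Finset W} (hI : Clq H I)
    (hc : Fintype.card V ≤ I.card) : Contains H T := by
  have : 0 < I.card := lt_of_lt_of_le Fintype.card_pos hc
  obtain ⟨w, -⟩ := Finset.card_pos.1 this
  obtain ⟨ψ, h1, h2, -⟩ := two_stage w (Finset.univ : Finset V) ∅ I ∅ (by simp) (by simp) (by simp) hc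
  refine ⟨ψ, fun a b h => h1 (by simp) (by simp) h, fun u v huv => hI _ (h2 _ (by simp)) _ (h2 _ (by simp)) ?_⟩
  intro e
  exact huv.ne (h1 (by simp) (by simp) e)

/-- acyclicity: two neighbours of `c` joined by a walk avoiding `c` coincide -/
lemma nbr_unique {T : SimpleGraph V} (hT : T.IsAcyclic) {c u v : V} (hu : T.Adj c u) (hv : T.Adj c v)
    (p : T.Walk v u) (hp : c ∉ p.support) : u = v := by
  have hb := SimpleGraph.isAcyclic_iff_forall_adj_isBridge.1 hT hu
  rw [SimpleGraph.isBridge_iff_forall_walk_mem_edges] at hb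
  have := hb (SimpleGraph.Walk.cons hv p)
  rw [SimpleGraph.Walk.edges_cons, List.mem_cons] at this
  rcases this with h | h
  · rw [Sym2.eq_iff] at h
    rcases h with h | h
    · exact h.2
    · exact absurd h.2 hu.ne.symm
  · exact absurd (SimpleGraph.Walk.fst_mem_support_of_mem_edges p h) hp

/-- path connected -/
def PC (T : SimpleGraph V) (S : Finset V) : Prop :=
  ∀ x ∈ S, ∀ y ∈ S, ∃ p : T.Walk x y, ∀ z ∈ p.support, z ∈ S

lemma greedy_tree [Fintype V] [Fintype W] [Nonempty W] {T : SimpleGraph V} (hT : T.IsTree) {H : SimpleGraph W}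
    (hd : ∀ w, Fintype.card V ≤ dg H w Finset.univ + 1) : Contains H T := by
  have step : ∀ q, q < Fintype.card V → ∃ S : Finset V, S.card = q + 1 ∧ PC T S ∧ ∃ φ : V → W,
      Set.InjOn φ S ∧ ∀ x ∈ S, ∀ y ∈ S, T.Adj x y → H.Adj (φ x) (φ y) := by
    intro q
    induction q with
    | zero =>
      intro h0
      obtain ⟨r⟩ := Fintype.card_pos_iff.1 h0
      obtain ⟨w⟩ := ‹Nonempty W›
      refine ⟨{r}, by simp, ?_, fun _ => w, by simp, ?_⟩
      · intro x hx y hy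
        rw [Finset.mem_singleton] at hx hy
        subst hx; subst hy
        exact ⟨.nil, by simp⟩
      · intro x hx y hy hxy
        rw [Finset.mem_singleton] at hx hy
        subst hx; subst hy
        exact absurd rfl hxy.ne
    | succ q ih =>
      intro hq
      obtain ⟨S, hc, hpc, φ, hinj, hadj⟩ := ih (by omega)
      -- a vertex outside adjacent to S
      have hex : ∃ u ∈ S, ∃ v ∉ S, T.Adj u v := by
        by_contra hno
        push Not at hno
        obtain ⟨r, hr⟩ := Finset.card_pos.1 (by omega : 0 < S.card)
        have : ∀ x, x ∈ S := by
          intro x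
          have := (SimpleGraph.reachable_iff_reflTransGen _ _).1 (hT.1.preconnected r x)
          induction this with
          | refl => exact hr
          | tail _ h ih' => by_contra hn; exact hno _ ih' _ hn h
        have : S = Finset.univ := Finset.eq_univ_iff_forall.2 this
        rw [this, Finset.card_univ] at hc
        omega
      obtain ⟨u, hu, v, hv, huv⟩ := hex
      have hw : ∃ w, H.Adj (φ u) w ∧ w ∉ S.image φ := by
        by_contra hno
        push Not at hno
        have hsub : Finset.univ.filter (H.Adj (φ u)) ⊆ (S.image φ).erase (φ u) := by
          intro x hx
          have hx := (Finset.mem_filter.1 hx).2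
          exact Finset.mem_erase.2 ⟨hx.ne.symm, hno x hx⟩
        have h1 := Finset.card_le_card hsub
        rw [Finset.card_erase_of_mem (Finset.mem_image_of_mem _ hu), Finset.card_image_of_injOn hinj] at h1
        have := hd (φ u)
        unfold dg at this
        omega
      obtain ⟨w, huw, hwS⟩ := hw
      have huniq : ∀ x ∈ S, T.Adj x v → x = u := by
        intro x hx hxv
        obtain ⟨p, hp⟩ := hpc u hu x hx
        exact nbr_unique hT.2 hxv.symm huv.symm p (fun h => hv (hp _ h))
      have hval : ∀ x ∈ S, Function.update φ v w x = φ x := fun x hx =>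
        Function.update_of_ne (by rintro rfl; exact hv hx) _ _
      refine ⟨insert v S, by rw [Finset.card_insert_of_notMem hv, hc], ?_, Function.update φ v w, ?_, ?_⟩
      · intro x hx y hy
        have lift : ∀ x ∈ S, ∃ p : T.Walk v x, ∀ z ∈ p.support, z ∈ insert v S := by
          intro x hx
          obtain ⟨p, hp⟩ := hpc u hu x hx
          refine ⟨.cons huv.symm p, ?_⟩
          intro z hz
          rw [SimpleGraph.Walk.support_cons, List.mem_cons] at hz
          rcases hz with rfl | hz
          · simp
          · exact Finset.mem_insert_of_mem (hp z hz)
        rcases Finset.mem_insert.1 hx with rfl | hx1 <;> rcases Finset.mem_insert.1 hy with rfl | hy1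
        · exact ⟨.nil, by simp⟩
        · exact lift y hy1
        · obtain ⟨p, hp⟩ := lift x hx1
          exact ⟨p.reverse, fun z hz => hp z (by simpa using hz)⟩
        · obtain ⟨p, hp⟩ := hpc x hx1 y hy1
          exact ⟨p, fun z hz => Finset.mem_insert_of_mem (hp z hz)⟩
      · intro x hx y hy hxy
        rcases Finset.mem_insert.1 (Finset.mem_coe.1 hx) with rfl | hx1 <;>
          rcases Finset.mem_insert.1 (Finset.mem_coe.1 hy) with rfl | hy1
        · rfl
        · rw [hval y hy1, Function.update_self] at hxy
          exact absurd (Finset.mem_image.2 ⟨y, hy1, hxy.symm⟩) hwS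
        · rw [hval x hx1, Function.update_self] at hxy
          exact absurd (Finset.mem_image.2 ⟨x, hx1, hxy⟩) hwS
        · rw [hval x hx1, hval y hy1] at hxy
          exact hinj hx1 hy1 hxy
      · intro x hx y hy hxy
        rcases Finset.mem_insert.1 hx with rfl | hx1 <;> rcases Finset.mem_insert.1 hy with rfl | hy1
        · exact absurd rfl hxy.ne
        · rw [hval y hy1, Function.update_self, huniq y hy1 hxy.symm]
          exact huw.symm
        · rw [hval x hx1, Function.update_self, huniq x hx1 hxy]
          exact huw
        · rw [hval x hx1, hval y hy1]
          exact hadj x hx1 y hy1 hxy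
  have hpos : 0 < Fintype.card V := Fintype.card_pos_iff.2 hT.1.nonempty
  obtain ⟨S, hc, -, φ, hinj, hadj⟩ := step (Fintype.card V - 1) (by omega)
  have : S = Finset.univ := Finset.eq_univ_of_card S (by omega)
  subst this
  exact ⟨φ, fun a b h => hinj (by simp) (by simp) h, fun u v h => hadj u (by simp) v (by simp) h⟩

/-- the branch at `u` of the tree minus `c` -/
noncomputable def Br [Fintype V] (T : SimpleGraph V) (c u : V) : Finset V :=
  Finset.univ.filter (fun x => Relation.ReflTransGen (fun a b => T.Adj a b ∧ b ≠ c) u x)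

section br
variable [Fintype V] {T : SimpleGraph V} {c u : V}

lemma mem_br {x : V} : x ∈ Br T c u ↔ Relation.ReflTransGen (fun a b => T.Adj a b ∧ b ≠ c) u x := by
  simp [Br]

lemma br_self : u ∈ Br T c u := mem_br.2 .refl

lemma br_closed {x y : V} (hx : x ∈ Br T c u) (h : T.Adj x y) (hy : y ≠ c) : y ∈ Br T c u :=
  mem_br.2 ((mem_br.1 hx).tail ⟨h, hy⟩)

lemma br_walk {x : V} (hu : u ≠ c) (hx : x ∈ Br T c u) : ∃ p : T.Walk u x, c ∉ p.support := by
  have := mem_br.1 hx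
  induction this with
  | refl => exact ⟨.nil, by simpa using hu.symm⟩
  | tail h1 h2 ih =>
    obtain ⟨p, hp⟩ := ih (mem_br.2 h1)
    refine ⟨p.concat h2.1, ?_⟩
    rw [SimpleGraph.Walk.support_concat]
    intro hh
    rw [List.mem_append, List.mem_singleton] at hh
    rcases hh with hh | hh
    · exact hp hh
    · exact h2.2 hh.symm

lemma br_notMem (hu : u ≠ c) : c ∉ Br T c u := by
  intro h
  obtain ⟨p, hp⟩ := br_walk hu h
  exact hp p.end_mem_support

lemma br_nbr (hT : T.IsAcyclic) (hu : T.Adj c u) {x : V} (hx : x ∈ Br T c u) (hcx : T.Adj c x) : x = u := by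
  obtain ⟨p, hp⟩ := br_walk hu.ne.symm hx
  exact nbr_unique hT hcx hu p hp

lemma br_disj (hT : T.IsAcyclic) (hu : T.Adj c u) : Disjoint (Br T c u) (Br T u c) := by
  rw [Finset.disjoint_left]
  intro x h1 h2
  obtain ⟨p, hp⟩ := br_walk hu.ne.symm h1
  obtain ⟨q, hq⟩ := br_walk hu.ne h2
  have hb := SimpleGraph.isAcyclic_iff_forall_adj_isBridge.1 hT hu
  rw [SimpleGraph.isBridge_iff_forall_walk_mem_edges] at hb
  have := hb (q.append p.reverse)
  rw [SimpleGraph.Walk.edges_append, List.mem_append, SimpleGraph.Walk.edges_reverse, List.mem_reverse] at this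
  rcases this with h | h
  · exact hq (SimpleGraph.Walk.snd_mem_support_of_mem_edges _ h)
  · exact hp (SimpleGraph.Walk.fst_mem_support_of_mem_edges _ h)

lemma centroid (hT : T.IsTree) : ∃ c, ∀ u, T.Adj c u → 2 * (Br T c u).card ≤ Fintype.card V := by
  by_contra hno
  push Not at hno
  have hne : ∃ q, ∃ c u, T.Adj c u ∧ Fintype.card V < 2 * (Br T c u).card ∧ (Br T c u).card = q := by
    obtain ⟨r⟩ := hT.1.nonempty
    obtain ⟨u, h1, h2⟩ := hno r
    exact ⟨_, r, u, h1, h2, rfl⟩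
  obtain ⟨c, u, hcu, hbig, hq⟩ := Nat.find_spec hne
  have hmin : ∀ c' u', T.Adj c' u' → Fintype.card V < 2 * (Br T c' u').card →
      (Br T c u).card ≤ (Br T c' u').card := by
    intro c' u' h1 h2
    rw [hq]
    exact Nat.find_min' hne ⟨c', u', h1, h2, rfl⟩
  obtain ⟨u', huu', hbig'⟩ := hno u
  have hle := hmin u u' huu' hbig'
  by_cases hc : u' = c
  · subst hc
    have h1 := Finset.card_le_univ (Br T u' u ∪ Br T u u')
    rw [Finset.card_union_of_disjoint (br_disj hT.2 hcu)] at h1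
    omega
  · have hsub : Br T u u' ⊂ Br T c u := by
      rw [Finset.ssubset_iff_of_subset]
      · exact ⟨u, br_self, br_notMem huu'.ne.symm⟩
      · intro x hx
        have := mem_br.1 hx
        induction this with
        | refl => exact br_closed br_self huu' hc
        | @tail y z h1 h2 ih =>
          have hy := ih (mem_br.2 h1)
          apply br_closed hy h2.1
          rintro rfl
          have hyu := br_nbr hT.2 hcu hy h2.1.symm
          exact br_notMem huu'.ne.symm (hyu ▸ mem_br.2 h1)
    have := Finset.card_lt_card hsub
    omega

end br
end Main

section Main
open Classical

variable {V W : Type*}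

lemma lemC [Fintype V] {T : SimpleGraph V} (hT : T.IsTree) {H : SimpleGraph W} {k : ℕ} {I J : Finset W}
    (hI : Clq H I) (hJ : Clq H J) (hd : Disjoint I J) (hn : 8 * k ≤ Fintype.card V)
    (hi : Fintype.card V ≤ I.card + 2 * k) (hj : Fintype.card V ≤ J.card + 2 * k)
    (hno : ¬ Contains H T) (w : W) : dg H w (I ∪ J) + 2 ≤ Fintype.card V := by
  by_contra hcon
  apply hno
  clear hno
  set n := Fintype.card V with hndef
  obtain ⟨c, hc⟩ := centroid hT
  rw [dg_union hd] at hcon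
  set I' := I.erase w with hI'
  set J' := J.erase w with hJ'
  have hi' : n ≤ I'.card + 2 * k + 1 := by
    have := Finset.pred_card_le_card_erase (s := I) (a := w)
    rw [← hI'] at this
    omega
  have hj' : n ≤ J'.card + 2 * k + 1 := by
    have := Finset.pred_card_le_card_erase (s := J) (a := w)
    rw [← hJ'] at this
    omega
  rw [← dg_erase (S := I), ← dg_erase (S := J), ← hI', ← hJ'] at hcon
  set NI := I'.filter (H.Adj w) with hNI
  set NJ := J'.filter (H.Adj w) with hNJ
  have hhI : NI.card ≤ I'.card := Finset.card_filter_le _ _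
  have hhJ : NJ.card ≤ J'.card := Finset.card_filter_le _ _
  have hsum : n ≤ NI.card + NJ.card + 1 := by
    have h1 : NI.card = dg H w I' := rfl
    have h2 : NJ.card = dg H w J' := rfl
    omega
  set N := Finset.univ.filter (T.Adj c) with hN
  have memN : ∀ x, x ∈ N ↔ T.Adj c x := fun x => by simp [hN]
  let Cl : Finset V → Prop := fun S => c ∉ S ∧ ∀ x ∈ S, ∀ y, T.Adj x y → y ≠ c → y ∈ S
  let P : Finset V → Prop := fun S => Cl S ∧ (N \ S).card ≤ NI.card ∧ n ≤ S.card + I'.card + 1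
  have hP0 : P (Finset.univ.erase c) := by
    refine ⟨⟨by simp, fun x _ y _ hy => by simp [hy]⟩, ?_, ?_⟩
    · have : N \ Finset.univ.erase c = ∅ := by
        ext x
        simp only [Finset.mem_sdiff, memN, Finset.mem_erase, Finset.mem_univ, and_true, not_not, Finset.notMem_empty,
          iff_false, not_and]
        intro h
        exact h.ne.symm
      rw [this]; simp
    · rw [Finset.card_erase_of_mem (Finset.mem_univ c), Finset.card_univ]
      omega
  obtain ⟨S, hS, hmin⟩ := Finset.exists_min_image (Finset.univ.filter P) Finset.card ⟨_, by simpa using hP0⟩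
  have hPS : P S := (Finset.mem_filter.1 hS).2
  have hmin' : ∀ S', P S' → S.card ≤ S'.card := fun S' h => hmin S' (by simpa using h)
  obtain ⟨⟨hcS, hcl⟩, hP1, hP2⟩ := hPS
  set Rr := (Finset.univ.erase c) \ S with hRr
  have hRc : Rr.card + S.card + 1 = n := by
    have hs : S ⊆ Finset.univ.erase c := fun x hx => by
      simp only [Finset.mem_erase, Finset.mem_univ, and_true]; rintro rfl; exact hcS hx
    have h1 := Finset.card_sdiff_add_card_eq_card hs
    rw [Finset.card_erase_of_mem (Finset.mem_univ c), Finset.card_univ, ← hRr] at h1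
    have : 0 < n := Fintype.card_pos_iff.2 ⟨c⟩
    omega
  have hNR : N \ S ⊆ Rr := by
    intro x hx
    rw [Finset.mem_sdiff, memN] at hx
    simp only [hRr, Finset.mem_sdiff, Finset.mem_erase, Finset.mem_univ, and_true]
    exact ⟨hx.1.ne.symm, hx.2⟩
  have hkey : S.card ≤ J'.card ∧ (N ∩ S).card ≤ NJ.card := by
    by_cases htight : (N \ S).card = NI.card
    · have h1 := Finset.card_le_card hNR
      have h2 := Finset.card_le_card (Finset.inter_subset_right : N ∩ S ⊆ S)
      omega
    by_cases hemp : (N ∩ S) = ∅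
    · have hSe : S = ∅ := by
        by_contra hne
        obtain ⟨x, hx⟩ := Finset.nonempty_iff_ne_empty.2 hne
        have hz : c ∈ S ∨ ∃ y ∈ S, T.Adj c y := by
          have := (SimpleGraph.reachable_iff_reflTransGen _ _).1 (hT.1.preconnected x c)
          have aux : ∀ z, Relation.ReflTransGen T.Adj x z → (z ∈ S ∨ ∃ y ∈ S, T.Adj c y) := by
            intro z hz
            induction hz with
            | refl => exact Or.inl hx
            | @tail a b _ h ih =>
              rcases ih with ih | ih
              · by_cases hb : b = c
                · subst hb; exact Or.inr ⟨a, ih, h.symm⟩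
                · exact Or.inl (hcl a ih b h hb)
              · exact Or.inr ih
          exact aux c this
        rcases hz with hz | ⟨y, hy, hcy⟩
        · exact hcS hz
        · have : y ∈ N ∩ S := Finset.mem_inter.2 ⟨(memN y).2 hcy, hy⟩
          rw [hemp] at this
          simp at this
      rw [hSe]; simp
    obtain ⟨u, hu⟩ := Finset.nonempty_iff_ne_empty.2 hemp
    rw [Finset.mem_inter, memN] at hu
    have hBS : Br T c u ⊆ S := by
      intro x hx
      have := mem_br.1 hx
      induction this with
      | refl => exact hu.2
      | tail h1 h2 ih => exact hcl _ (ih (mem_br.2 h1)) _ h2.1 h2.2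
    have hBpos : 0 < (Br T c u).card := Finset.card_pos.2 ⟨u, br_self⟩
    have hSB := Finset.card_sdiff_add_card_eq_card hBS
    have hnP : ¬ P (S \ Br T c u) := by
      intro h
      have := hmin' _ h
      omega
    have hClB : Cl (S \ Br T c u) := by
      refine ⟨fun h => hcS (Finset.mem_sdiff.1 h).1, ?_⟩
      intro x hx y hxy hy
      rw [Finset.mem_sdiff] at hx ⊢
      refine ⟨hcl x hx.1 y hxy hy, fun hyB => hx.2 (br_closed hyB hxy.symm ?_)⟩
      rintro rfl
      exact hcS hx.1
    have hsubu : N \ (S \ Br T c u) ⊆ insert u (N \ S) := by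
      intro x hx
      simp only [Finset.mem_sdiff, memN, Finset.mem_insert, not_and, not_not] at hx ⊢
      by_cases hxS : x ∈ S
      · exact Or.inl (br_nbr hT.2 hu.1 (hx.2 hxS) hx.1)
      · exact Or.inr ⟨hx.1, hxS⟩
    have h1 := Finset.card_le_card hsubu
    have h2 := Finset.card_insert_le u (N \ S)
    have h3 : ¬ (n ≤ (S \ Br T c u).card + I'.card + 1) := fun h => hnP ⟨hClB, by omega, h⟩
    have h4 : N ∩ S ⊆ insert u (S \ Br T c u) := by
      intro x hx
      simp only [Finset.mem_sdiff, memN, Finset.mem_insert, Finset.mem_inter] at hx ⊢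
      by_cases hxB : x ∈ Br T c u
      · exact Or.inl (br_nbr hT.2 hu.1 hxB hx.1)
      · exact Or.inr ⟨hx.2, hxB⟩
    have h5 := Finset.card_le_card h4
    have h6 := Finset.card_insert_le u (S \ Br T c u)
    have h7 := hc u hu.1
    constructor <;> omega
  obtain ⟨ψ, hψ1, hψ2, hψ3⟩ := two_stage w S (N ∩ S) J' NJ Finset.inter_subset_right (Finset.filter_subset _ _)
    hkey.2 hkey.1
  obtain ⟨θ, hθ1, hθ2, hθ3⟩ := two_stage w Rr (N \ S) I' NI hNR (Finset.filter_subset _ _)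
    hP1 (by omega)
  have hcases : ∀ x, x = c ∨ (x ≠ c ∧ x ∈ S) ∨ (x ≠ c ∧ x ∉ S ∧ x ∈ Rr) := by
    intro x
    by_cases h1 : x = c
    · exact Or.inl h1
    by_cases h2 : x ∈ S
    · exact Or.inr (Or.inl ⟨h1, h2⟩)
    · exact Or.inr (Or.inr ⟨h1, h2, by simp [hRr, h1, h2]⟩)
  have hdj := Finset.disjoint_left.1 hd
  let f : V → W := fun x => if x = c then w else if x ∈ S then ψ x else θ x
  have fc : f c = w := by simp [f]
  have fS : ∀ x, x ≠ c → x ∈ S → f x = ψ x := fun x h1 h2 => by simp [f, h1, h2]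
  have fR : ∀ x, x ≠ c → x ∉ S → f x = θ x := fun x h1 h2 => by simp [f, h1, h2]
  have eJ : ∀ x ∈ S, ψ x ≠ w ∧ ψ x ∈ J := fun x hx => Finset.mem_erase.1 (hψ2 x hx)
  have eI : ∀ x ∈ Rr, θ x ≠ w ∧ θ x ∈ I := fun x hx => Finset.mem_erase.1 (hθ2 x hx)
  have finj : Function.Injective f := by
    intro x y hxy
    rcases hcases x with rfl | ⟨h1, h2⟩ | ⟨h1, h2, h3⟩ <;>
      rcases hcases y with e | ⟨g1, g2⟩ | ⟨g1, g2, g3⟩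
    · exact e.symm
    · rw [fc, fS y g1 g2] at hxy; exact absurd hxy.symm (eJ y g2).1
    · rw [fc, fR y g1 g2] at hxy; exact absurd hxy.symm (eI y g3).1
    · rw [e, fc, fS x h1 h2] at hxy; exact absurd hxy (eJ x h2).1
    · rw [fS x h1 h2, fS y g1 g2] at hxy; exact hψ1 h2 g2 hxy
    · rw [fS x h1 h2, fR y g1 g2] at hxy
      exact absurd (eJ x h2).2 (hdj (hxy ▸ (eI y g3).2))
    · rw [e, fc, fR x h1 h2] at hxy; exact absurd hxy (eI x h3).1
    · rw [fR x h1 h2, fS y g1 g2] at hxy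
      exact absurd (eJ y g2).2 (hdj (hxy ▸ (eI x h3).2))
    · rw [fR x h1 h2, fR y g1 g2] at hxy; exact hθ1 h3 g3 hxy
  have fcadj : ∀ y, T.Adj c y → H.Adj w (f y) := by
    intro y hy
    by_cases hyS : y ∈ S
    · rw [fS y hy.ne.symm hyS]
      exact (Finset.mem_filter.1 (hψ3 y (Finset.mem_inter.2 ⟨(memN y).2 hy, hyS⟩))).2
    · rw [fR y hy.ne.symm hyS]
      exact (Finset.mem_filter.1 (hθ3 y (Finset.mem_sdiff.2 ⟨(memN y).2 hy, hyS⟩))).2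
  refine ⟨f, finj, ?_⟩
  intro x y hxy
  have hne : f x ≠ f y := fun e => hxy.ne (finj e)
  rcases hcases x with rfl | ⟨h1, h2⟩ | ⟨h1, h2, h3⟩
  · rw [fc]; exact fcadj y hxy
  · rcases hcases y with rfl | ⟨g1, g2⟩ | ⟨g1, g2, g3⟩
    · rw [fc]; exact (fcadj x hxy.symm).symm
    · rw [fS x h1 h2, fS y g1 g2] at *; exact hJ _ (eJ x h2).2 _ (eJ y g2).2 hne
    · exact absurd (hcl x h2 y hxy g1) g2
  · rcases hcases y with rfl | ⟨g1, g2⟩ | ⟨g1, g2, g3⟩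
    · rw [fc]; exact (fcadj x hxy.symm).symm
    · exact absurd (hcl y g2 x hxy.symm h1) h2
    · rw [fR x h1 h2, fR y g1 g2] at *; exact hI _ (eI x h3).2 _ (eI y g3).2 hne
end Main

section Main
open Classical

variable {V W : Type*}

lemma dg_one [Fintype V] {T : SimpleGraph V} {v : V} (h : dg T v Finset.univ = 1) :
    ∃ u, ∀ x, T.Adj v x ↔ x = u := by
  obtain ⟨u, hu⟩ := Finset.card_eq_one.1 h
  refine ⟨u, fun x => ?_⟩
  have : x ∈ Finset.univ.filter (T.Adj v) ↔ x ∈ ({u} : Finset V) := by rw [hu]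
  simpa using this

lemma dg_two [Fintype V] {T : SimpleGraph V} {v : V} (h : dg T v Finset.univ = 2) :
    ∃ u u', u ≠ u' ∧ ∀ x, T.Adj v x ↔ (x = u ∨ x = u') := by
  obtain ⟨u, u', hne, hu⟩ := Finset.card_eq_two.1 h
  refine ⟨u, u', hne, fun x => ?_⟩
  have : x ∈ Finset.univ.filter (T.Adj v) ↔ x ∈ ({u, u'} : Finset V) := by rw [hu]
  simpa using this

lemma sum_dg_comm (T : SimpleGraph V) (A B : Finset V) : ∑ a ∈ A, dg T a B = ∑ b ∈ B, dg T b A := by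
  unfold dg
  simp only [Finset.card_filter]
  rw [Finset.sum_comm]
  simp only [T.adj_comm]

lemma sum_dg_tree [Fintype V] {T : SimpleGraph V} (hT : T.IsTree) :
    ∑ v, dg T v Finset.univ + 2 = 2 * Fintype.card V := by
  have h1 := T.sum_degrees_eq_twice_card_edges
  have h2 := hT.card_edgeFinset
  have h3 : ∀ v, dg T v Finset.univ = T.degree v := by
    intro v
    unfold dg
    rw [← SimpleGraph.card_neighborFinset_eq_degree]
    congr 1
    ext x
    simp
  simp only [h3]
  rw [h1]
  omega

/-- leaves -/
noncomputable def Lf [Fintype V] (T : SimpleGraph V) : Finset V :=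
  Finset.univ.filter (fun v => dg T v Finset.univ = 1)

/-- parents of leaves -/
noncomputable def Pt [Fintype V] (T : SimpleGraph V) : Finset V :=
  Finset.univ.filter (fun v => ∃ l ∈ Lf T, T.Adj v l)

/-- admissible family of degree two vertices -/
def Adm [Fintype V] (T : SimpleGraph V) (Q : Finset V) : Prop :=
  (∀ q ∈ Q, dg T q Finset.univ = 2 ∧ q ∉ Pt T ∧ ∀ x ∈ Pt T, ¬ T.Adj q x) ∧
  ∀ q ∈ Q, ∀ q' ∈ Q, q ≠ q' → ¬ T.Adj q q' ∧ ∀ x, ¬ (T.Adj q x ∧ T.Adj q' x)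

section tl
variable [Fintype V] {T : SimpleGraph V}

lemma mem_Lf {v : V} : v ∈ Lf T ↔ dg T v Finset.univ = 1 := by simp [Lf]
lemma mem_Pt {v : V} : v ∈ Pt T ↔ ∃ l ∈ Lf T, T.Adj v l := by simp [Pt]

lemma dg_pos (hT : T.IsTree) (hn : 3 ≤ Fintype.card V) (v : V) : 1 ≤ dg T v Finset.univ := by
  have : Nontrivial V := Fintype.one_lt_card_iff_nontrivial.1 (by omega)
  obtain ⟨w, hw⟩ := hT.1.preconnected.exists_adj_of_nontrivial v
  exact Finset.card_pos.2 ⟨w, by simpa using hw⟩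

lemma leaf_not_adj (hT : T.IsTree) (hn : 3 ≤ Fintype.card V) {l l' : V} (h : l ∈ Lf T) (h' : l' ∈ Lf T) :
    ¬ T.Adj l l' := by
  intro hll
  obtain ⟨u, hu⟩ := dg_one (mem_Lf.1 h)
  obtain ⟨u', hu'⟩ := dg_one (mem_Lf.1 h')
  have e1 := (hu _).1 hll
  have e2 := (hu' _).1 hll.symm
  subst e1; subst e2
  have : ∀ x, x = l ∨ x = l' := by
    intro x
    have := (SimpleGraph.reachable_iff_reflTransGen _ _).1 (hT.1.preconnected l x)
    induction this with
    | refl => exact Or.inl rfl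
    | tail _ hstep ih =>
      rcases ih with e | e
      · rw [e] at hstep; exact Or.inr ((hu _).1 hstep)
      · rw [e] at hstep; exact Or.inl ((hu' _).1 hstep)
  have h1 : (Finset.univ : Finset V) ⊆ {l, l'} := fun x _ => by simpa using this x
  have h2 := Finset.card_le_card h1
  have h3 := Finset.card_insert_le l {l'}
  simp only [Finset.card_univ, Finset.card_singleton] at h2 h3
  omega

lemma tl_count (hT : T.IsTree) (hn : 3 ≤ Fintype.card V) : ∃ Q, Adm T Q ∧
    Fintype.card V + 2 ≤ (Lf T).card + 3 * (Pt T).card + 5 * Q.card := by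
  have hadm0 : Adm T ∅ := ⟨by simp, by simp⟩
  obtain ⟨Q, hQ, hmax⟩ := Finset.exists_max_image (Finset.univ.filter (Adm T)) Finset.card ⟨∅, by simpa using hadm0⟩
  have hQ : Adm T Q := (Finset.mem_filter.1 hQ).2
  have hmax' : ∀ Q', Adm T Q' → Q'.card ≤ Q.card := fun S' h => hmax S' (by simpa using h)
  refine ⟨Q, hQ, ?_⟩
  set NQ : Finset V := Finset.univ.filter (fun v => ∃ q ∈ Q, T.Adj q v) with hNQ
  have memNQ : ∀ v, v ∈ NQ ↔ ∃ q ∈ Q, T.Adj q v := fun v => by simp [hNQ]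
  set U : Finset V := Finset.univ.filter (fun v => v ∉ Lf T ∧ v ∉ Pt T ∧ v ∉ Q ∧ v ∉ NQ) with hU
  have memU : ∀ v, v ∈ U ↔ v ∉ Lf T ∧ v ∉ Pt T ∧ v ∉ Q ∧ v ∉ NQ := fun v => by simp [hU]
  have dLP : Disjoint (Lf T) (Pt T) := by
    rw [Finset.disjoint_left]
    intro v hv hv'
    obtain ⟨l, hl, hvl⟩ := mem_Pt.1 hv'
    exact leaf_not_adj hT hn hv hl hvl
  have dLQ : Disjoint (Lf T) Q := by
    rw [Finset.disjoint_left]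
    intro v hv hv'
    have h1 := (hQ.1 v hv').1
    have h2 := mem_Lf.1 hv
    omega
  have dLN : Disjoint (Lf T) NQ := by
    rw [Finset.disjoint_left]
    intro v hv hv'
    obtain ⟨q, hq, hqv⟩ := (memNQ v).1 hv'
    exact (hQ.1 q hq).2.1 (mem_Pt.2 ⟨v, hv, hqv⟩)
  have dPQ : Disjoint (Pt T) Q := by
    rw [Finset.disjoint_left]
    intro v hv hv'
    exact (hQ.1 v hv').2.1 hv
  have dPN : Disjoint (Pt T) NQ := by
    rw [Finset.disjoint_left]
    intro v hv hv'
    obtain ⟨q, hq, hqv⟩ := (memNQ v).1 hv'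
    exact (hQ.1 q hq).2.2 v hv hqv
  have dQN : Disjoint Q NQ := by
    rw [Finset.disjoint_left]
    intro v hv hv'
    obtain ⟨q, hq, hqv⟩ := (memNQ v).1 hv'
    exact (hQ.2 q hq v hv hqv.ne).1 hqv
  have d1 : Disjoint (Lf T ∪ Pt T) Q := Finset.disjoint_union_left.2 ⟨dLQ, dPQ⟩
  have d2 : Disjoint (Lf T ∪ Pt T ∪ Q) NQ :=
    Finset.disjoint_union_left.2 ⟨Finset.disjoint_union_left.2 ⟨dLN, dPN⟩, dQN⟩
  have d3 : Disjoint (Lf T ∪ Pt T ∪ Q ∪ NQ) U := by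
    rw [Finset.disjoint_left]
    intro v hv hv'
    have := (memU v).1 hv'
    simp only [Finset.mem_union] at hv
    tauto
  have huniv : Lf T ∪ Pt T ∪ Q ∪ NQ ∪ U = Finset.univ := by
    rw [Finset.eq_univ_iff_forall]
    intro v
    have := memU v
    simp only [Finset.mem_union]
    tauto
  have hsplit : ∀ f : V → ℕ, ∑ v, f v = ∑ v ∈ Lf T, f v + ∑ v ∈ Pt T, f v + ∑ v ∈ Q, f v + ∑ v ∈ NQ, f v
      + ∑ v ∈ U, f v := by
    intro f
    rw [← huniv, Finset.sum_union d3, Finset.sum_union d2, Finset.sum_union d1, Finset.sum_union dLP]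
  have hcard := hsplit (fun _ => 1)
  simp only [Finset.sum_const, smul_eq_mul, mul_one, Finset.card_univ] at hcard
  have hdeg := hsplit (fun v => dg T v Finset.univ)
  have hsum := sum_dg_tree hT
  have hLsum : ∑ v ∈ Lf T, dg T v Finset.univ = (Lf T).card := by
    rw [Finset.sum_congr rfl (fun v hv => mem_Lf.1 hv)]; simp
  have hQsum : ∑ v ∈ Q, dg T v Finset.univ = 2 * Q.card := by
    rw [Finset.sum_congr rfl (fun v hv => (hQ.1 v hv).1)]; simp [mul_comm]
  have hNQc : NQ.card ≤ 2 * Q.card := by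
    have : NQ ⊆ Q.biUnion (fun q => Finset.univ.filter (T.Adj q)) := by
      intro v hv
      obtain ⟨q, hq, hqv⟩ := (memNQ v).1 hv
      exact Finset.mem_biUnion.2 ⟨q, hq, by simpa using hqv⟩
    refine (Finset.card_le_card this).trans (Finset.card_biUnion_le.trans ?_)
    rw [← hQsum]
    rfl
  -- bound (B)
  have hB : ∀ v ∈ U, 3 ≤ dg T v Finset.univ + dg T v (Pt T ∪ NQ) := by
    intro v hv
    rw [memU] at hv
    have h1 := dg_pos hT hn v
    have h2 : dg T v Finset.univ ≠ 1 := fun h => hv.1 (mem_Lf.2 h)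
    by_cases h3 : dg T v Finset.univ = 2
    swap
    · omega
    have h4 : 0 < dg T v (Pt T ∪ NQ) := by
      by_contra h0
      have h0 : ∀ x ∈ Pt T ∪ NQ, ¬ T.Adj v x := by
        intro x hx hvx
        apply h0
        exact Finset.card_pos.2 ⟨x, Finset.mem_filter.2 ⟨hx, hvx⟩⟩
      have hadm : Adm T (insert v Q) := by
        have hnadj : ∀ q ∈ Q, ¬ T.Adj q v := fun q hq h => hv.2.2.2 ((memNQ v).2 ⟨q, hq, h⟩)
        have hnc : ∀ q ∈ Q, ∀ x, ¬ (T.Adj q x ∧ T.Adj v x) := fun q hq x hx =>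
          h0 x (Finset.mem_union_right _ ((memNQ x).2 ⟨q, hq, hx.1⟩)) hx.2
        constructor
        · intro q hq
          rcases Finset.mem_insert.1 hq with rfl | hq
          · exact ⟨h3, hv.2.1, fun x hx => h0 x (Finset.mem_union_left _ hx)⟩
          · exact hQ.1 q hq
        · intro q hq q' hq' hne
          rcases Finset.mem_insert.1 hq with rfl | hq1 <;> rcases Finset.mem_insert.1 hq' with rfl | hq1'
          · exact absurd rfl hne
          · exact ⟨fun h => hnadj q' hq1' h.symm, fun x hx => hnc q' hq1' x ⟨hx.2, hx.1⟩⟩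
          · exact ⟨fun h => hnadj q hq1 h, fun x hx => hnc q hq1 x hx⟩
          · exact hQ.2 q hq1 q' hq1' hne
      have := hmax' _ hadm
      rw [Finset.card_insert_of_notMem hv.2.2.1] at this
      omega
    omega
  have hBs : 3 * U.card ≤ ∑ v ∈ U, dg T v Finset.univ + ∑ v ∈ U, dg T v (Pt T ∪ NQ) := by
    rw [← Finset.sum_add_distrib, mul_comm]
    exact Finset.card_nsmul_le_sum U _ 3 hB
  rw [sum_dg_comm T U (Pt T ∪ NQ), Finset.sum_union dPN] at hBs
  have hC : ∑ x ∈ Pt T, dg T x U + (Lf T).card ≤ ∑ x ∈ Pt T, dg T x Finset.univ := by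
    have e : (Lf T).card = ∑ x ∈ Pt T, dg T x (Lf T) := by
      rw [sum_dg_comm, Finset.card_eq_sum_ones]
      apply Finset.sum_congr rfl
      intro l hl
      obtain ⟨u, hu⟩ := dg_one (mem_Lf.1 hl)
      symm
      unfold dg
      rw [Finset.card_eq_one]
      refine ⟨u, ?_⟩
      ext x
      rw [Finset.mem_filter, Finset.mem_singleton, hu]
      refine ⟨fun h => h.2, fun h => ⟨mem_Pt.2 ⟨l, hl, ?_⟩, h⟩⟩
      exact ((hu x).2 h).symm
    rw [e, ← Finset.sum_add_distrib]
    apply Finset.sum_le_sum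
    intro x hx
    rw [← dg_union]
    · exact dg_mono (Finset.subset_univ _)
    · rw [Finset.disjoint_left]
      intro v hv hv'
      exact ((memU v).1 hv).1 hv'
  have hD : ∑ x ∈ NQ, dg T x U + NQ.card ≤ ∑ x ∈ NQ, dg T x Finset.univ := by
    rw [Finset.card_eq_sum_ones, ← Finset.sum_add_distrib]
    apply Finset.sum_le_sum
    intro x hx
    obtain ⟨q, hq, hqx⟩ := (memNQ x).1 hx
    have : 1 ≤ dg T x Q := Finset.card_pos.2 ⟨q, Finset.mem_filter.2 ⟨hq, hqx.symm⟩⟩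
    refine (Nat.add_le_add_left this _).trans ?_
    rw [← dg_union]
    · exact dg_mono (Finset.subset_univ _)
    · rw [Finset.disjoint_left]
      intro v hv hv'
      exact ((memU v).1 hv).2.2.1 hv'
  omega

/-- the family of leaves / degree two vertices used for the embeddings -/
structure TF (T : SimpleGraph V) (k : ℕ) (u₁ : V) (L1 F : Finset V) : Prop where
  hL : ∀ l ∈ L1, ∀ x, T.Adj l x ↔ x = u₁
  disj : Disjoint L1 F
  hF : ∀ f ∈ F, (∃ u, u ≠ u₁ ∧ (∀ x, T.Adj f x ↔ x = u) ∧ dg T u F ≤ 2) ∨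
    (∃ u u', u ≠ u' ∧ u ≠ u₁ ∧ u' ≠ u₁ ∧ (∀ x, T.Adj f x ↔ (x = u ∨ x = u')) ∧
      ∀ g ∈ L1 ∪ F, (T.Adj g u ∨ T.Adj g u') → g = f)
  indep : ∀ f ∈ L1 ∪ F, ∀ g ∈ L1 ∪ F, ¬ T.Adj f g
  size : 2 * k ≤ L1.card + F.card
  alt : 3 * k ≤ L1.card ∨ 2 ≤ F.card

lemma tl_arith {k n a p s x : ℕ} (hk : 8 ≤ k) (hn : k ^ 2 + k + 1 ≤ n) (ha : 1 ≤ a)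
    (h : n ≤ a * (p + 1) + 3 * p + 1 + 4 * s + 5 * x) : 2 * k ≤ a + 2 * p + s + x := by
  by_contra hc
  push Not at hc
  have h1 : k ^ 2 + k + 1 ≤ a * (p + 1) + 3 * p + 1 + 4 * s + 5 * x := hn.trans h
  zify at *
  have h2 : (k:ℤ)^2 + k + 1 ≤ 10 * k - 32 + (a - 7) * (p - 4) := by nlinarith
  rcases le_total (7:ℤ) a with h7 | h7 <;> rcases le_total (4:ℤ) p with h4 | h4
  · nlinarith [sq_nonneg (((a:ℤ) - 7) - 2 * (p - 4)), sq_nonneg ((k:ℤ) - 8)]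
  · nlinarith [mul_nonneg (sub_nonneg.2 h7) (sub_nonneg.2 h4)]
  · nlinarith [mul_nonneg (sub_nonneg.2 h7) (sub_nonneg.2 h4)]
  · have : (7 - (a:ℤ)) * (4 - p) ≤ 24 := by nlinarith
    nlinarith

lemma exists_TF (hT : T.IsTree) {k : ℕ} (hk : 8 ≤ k) (hn : k ^ 2 + k + 1 ≤ Fintype.card V) :
    ∃ u₁ L1 F, TF T k u₁ L1 F := by
  have hn3 : 3 ≤ Fintype.card V := by nlinarith
  obtain ⟨Q, hQ, hcount⟩ := tl_count hT hn3
  have hPne : (Pt T).Nonempty := by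
    have : ∃ v, dg T v Finset.univ = 1 := by
      by_contra hno
      push Not at hno
      have h1 : ∀ v ∈ (Finset.univ : Finset V), 2 ≤ dg T v Finset.univ := fun v _ => by
        have := dg_pos hT hn3 v
        have := hno v
        omega
      have h2 := Finset.card_nsmul_le_sum Finset.univ _ 2 h1
      have h3 := sum_dg_tree hT
      rw [Finset.card_univ, smul_eq_mul] at h2
      omega
    obtain ⟨l, hl⟩ := this
    obtain ⟨u, hu⟩ := dg_one hl
    exact ⟨u, mem_Pt.2 ⟨l, mem_Lf.2 hl, ((hu u).2 rfl).symm⟩⟩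
  obtain ⟨u₁, hu₁, hmax⟩ := Finset.exists_max_image (Pt T) (fun u => dg T u (Lf T)) hPne
  set P' := (Pt T).erase u₁ with hP'
  have hsel : ∀ u, ∃ s : Finset V, s ⊆ (Lf T).filter (T.Adj u) ∧ s.card = min 2 (dg T u (Lf T)) := fun u =>
    Finset.exists_subset_card_eq (min_le_right _ _)
  choose sel hsel1 hsel2 using hsel
  have hselm : ∀ u x, x ∈ sel u → x ∈ Lf T ∧ T.Adj u x := fun u x h => by
    simpa using hsel1 u h
  have hpar : ∀ x ∈ Lf T, ∀ u u', T.Adj u x → T.Adj u' x → u = u' := by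
    intro x hx u u' h h'
    obtain ⟨y, hy⟩ := dg_one (mem_Lf.1 hx)
    rw [(hy u).1 h.symm, (hy u').1 h'.symm]
  set L1 := (Lf T).filter (T.Adj u₁) with hL1
  set F0 := P'.biUnion sel with hF0
  have memL1 : ∀ x, x ∈ L1 ↔ x ∈ Lf T ∧ T.Adj u₁ x := fun x => by simp [hL1]
  have memF0 : ∀ x, x ∈ F0 ↔ ∃ u ∈ P', x ∈ sel u := fun x => by simp [hF0]
  have F0L : ∀ x ∈ F0, x ∈ Lf T := fun x hx => by
    obtain ⟨u, hu, hx⟩ := (memF0 x).1 hx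
    exact (hselm u x hx).1
  have QnL : ∀ x ∈ Q, x ∉ Lf T := fun x hx hl => by
    have h1 := (hQ.1 x hx).1
    have h2 := mem_Lf.1 hl
    omega
  have dF : Disjoint F0 Q := by
    rw [Finset.disjoint_left]
    intro x hx hx'
    exact QnL x hx' (F0L x hx)
  have hF0c : F0.card = ∑ u ∈ P', min 2 (dg T u (Lf T)) := by
    rw [hF0, Finset.card_biUnion]
    · exact Finset.sum_congr rfl (fun u _ => hsel2 u)
    · intro u hu u' hu' hne
      change Disjoint (sel u) (sel u')
      rw [Finset.disjoint_left]
      intro x hx hx'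
      exact hne (hpar x (hselm u x hx).1 u u' (hselm u x hx).2 (hselm u' x hx').2)
  have hLc : (Lf T).card = L1.card + ∑ u ∈ P', dg T u (Lf T) := by
    have e : (Lf T).card = ∑ x ∈ Pt T, dg T x (Lf T) := by
      rw [sum_dg_comm, Finset.card_eq_sum_ones]
      apply Finset.sum_congr rfl
      intro l hl
      obtain ⟨u, hu⟩ := dg_one (mem_Lf.1 hl)
      symm
      unfold dg
      rw [Finset.card_eq_one]
      refine ⟨u, ?_⟩
      ext x
      rw [Finset.mem_filter, Finset.mem_singleton, hu]
      refine ⟨fun h => h.2, fun h => ⟨mem_Pt.2 ⟨l, hl, ?_⟩, h⟩⟩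
      exact ((hu x).2 h).symm
    rw [e, ← Finset.add_sum_erase _ _ hu₁]
    rfl
  have hPc : (Pt T).card = P'.card + 1 := by
    rw [hP', Finset.card_erase_of_mem hu₁]
    have := Finset.card_pos.2 hPne
    omega
  have hL1pos : 1 ≤ L1.card := by
    obtain ⟨l, hl, hul⟩ := mem_Pt.1 hu₁
    exact Finset.card_pos.2 ⟨l, (memL1 l).2 ⟨hl, hul⟩⟩
  -- numbers
  obtain ⟨p, s, hps, hmin, hlam⟩ : ∃ p s, p + s = P'.card ∧ F0.card = 2 * p + s ∧
      ∑ u ∈ P', dg T u (Lf T) ≤ L1.card * p + s := by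
    refine ⟨(P'.filter (fun u => 2 ≤ dg T u (Lf T))).card, (P'.filter (fun u => ¬ 2 ≤ dg T u (Lf T))).card,
      Finset.card_filter_add_card_filter_not _, ?_, ?_⟩
    · rw [hF0c, ← Finset.sum_filter_add_sum_filter_not P' (fun u => 2 ≤ dg T u (Lf T))]
      congr 1
      · rw [Finset.sum_congr rfl (g := fun _ => 2), Finset.sum_const, smul_eq_mul, mul_comm]
        intro u hu
        have := (Finset.mem_filter.1 hu).2
        omega
      · rw [Finset.sum_congr rfl (g := fun _ => 1), Finset.sum_const, smul_eq_mul, mul_one]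
        intro u hu
        have h1 := (Finset.mem_filter.1 hu).2
        obtain ⟨l, hl, hul⟩ := mem_Pt.1 (Finset.mem_of_mem_erase (Finset.mem_filter.1 hu).1)
        have : 1 ≤ dg T u (Lf T) := Finset.card_pos.2 ⟨l, Finset.mem_filter.2 ⟨hl, hul⟩⟩
        omega
    · rw [← Finset.sum_filter_add_sum_filter_not P' (fun u => 2 ≤ dg T u (Lf T))]
      apply Nat.add_le_add
      · rw [mul_comm]
        refine Finset.sum_le_card_nsmul _ _ _ ?_
        intro u hu
        exact hmax u (Finset.mem_of_mem_erase (Finset.mem_filter.1 hu).1)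
      · refine (Finset.sum_le_card_nsmul _ _ 1 ?_).trans (by simp)
        intro u hu
        have h1 := (Finset.mem_filter.1 hu).2
        omega
  have hFc : (F0 ∪ Q).card = 2 * p + s + Q.card := by
    rw [Finset.card_union_of_disjoint dF, hmin]
  have hbound : Fintype.card V ≤ L1.card * (p + 1) + 3 * p + 1 + 4 * s + 5 * Q.card := by
    rw [hLc, hPc] at hcount
    have : L1.card * (p + 1) = L1.card * p + L1.card := by ring
    omega
  have LP : ∀ x ∈ Lf T, x ∉ Pt T := fun x hx hx' => by
    obtain ⟨l, hl, hvl⟩ := mem_Pt.1 hx'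
    exact leaf_not_adj hT hn3 hx hl hvl
  have QL : ∀ q ∈ Q, ∀ l ∈ Lf T, ¬ T.Adj q l := fun q hq l hl h =>
    (hQ.1 q hq).2.1 (mem_Pt.2 ⟨l, hl, h⟩)
  have hcas : ∀ x ∈ L1 ∪ (F0 ∪ Q), x ∈ Lf T ∨ x ∈ Q := by
    intro x hx
    simp only [Finset.mem_union] at hx
    rcases hx with hx | hx | hx
    · exact Or.inl ((memL1 x).1 hx).1
    · exact Or.inl (F0L x hx)
    · exact Or.inr hx
  refine ⟨u₁, L1, F0 ∪ Q, ?_, ?_, ?_, ?_, ?_, ?_⟩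
  · intro l hl x
    have h1 := (memL1 l).1 hl
    obtain ⟨u, hu⟩ := dg_one (mem_Lf.1 h1.1)
    rw [hu, (hu u₁).1 h1.2.symm]
  · rw [Finset.disjoint_left]
    intro x hx hx'
    have h1 := (memL1 x).1 hx
    rcases Finset.mem_union.1 hx' with h2 | h2
    · obtain ⟨u, hu, hxu⟩ := (memF0 x).1 h2
      have := hpar x h1.1 u₁ u h1.2 (hselm u x hxu).2
      exact (Finset.mem_erase.1 hu).1 this.symm
    · exact QnL x h2 h1.1
  · intro f hf
    rcases Finset.mem_union.1 hf with h2 | h2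
    · left
      obtain ⟨u, hu, hfu⟩ := (memF0 f).1 h2
      have h3 := hselm u f hfu
      obtain ⟨y, hy⟩ := dg_one (mem_Lf.1 h3.1)
      have e := (hy u).1 h3.2.symm
      subst e
      refine ⟨u, (Finset.mem_erase.1 hu).1, hy, ?_⟩
      have hsub : (F0 ∪ Q).filter (T.Adj u) ⊆ sel u := by
        intro x hx
        rw [Finset.mem_filter] at hx
        rcases Finset.mem_union.1 hx.1 with h4 | h4
        · obtain ⟨u', hu', hxu'⟩ := (memF0 x).1 h4
          have := hpar x (F0L x h4) u u' hx.2 (hselm u' x hxu').2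
          rw [this]; exact hxu'
        · exact absurd hx.2.symm ((hQ.1 x h4).2.2 u (Finset.mem_of_mem_erase hu))
      refine (Finset.card_le_card hsub).trans ?_
      rw [hsel2]
      exact min_le_left _ _
    · right
      obtain ⟨u, u', hne, huu⟩ := dg_two (hQ.1 f h2).1
      have hnP : ∀ x, T.Adj f x → x ∉ Pt T := fun x hx hxP => (hQ.1 f h2).2.2 x hxP hx
      have a1 := (huu u).2 (Or.inl rfl)
      have a2 := (huu u').2 (Or.inr rfl)
      refine ⟨u, u', hne, ?_, ?_, huu, ?_⟩
      · rintro rfl; exact hnP _ a1 hu₁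
      · rintro rfl; exact hnP _ a2 hu₁
      · intro g hg hadj
        have key : ∀ x, T.Adj f x → T.Adj g x → g = f := by
          intro x hfx hgx
          rcases hcas g hg with h5 | h5
          · exact absurd (mem_Pt.2 ⟨g, h5, hgx.symm⟩) (hnP x hfx)
          · by_contra hgf
            exact (hQ.2 g h5 f h2 hgf).2 x ⟨hgx, hfx⟩
        rcases hadj with h | h
        · exact key _ a1 h
        · exact key _ a2 h
  · intro f hf g hg hfg
    rcases hcas f hf with h1 | h1 <;> rcases hcas g hg with h2 | h2
    · exact leaf_not_adj hT hn3 h1 h2 hfg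
    · exact QL g h2 f h1 hfg.symm
    · exact QL f h1 g h2 hfg
    · exact (hQ.2 f h1 g h2 hfg.ne).1 hfg
  · rw [hFc]
    have := tl_arith hk hn hL1pos hbound
    omega
  · rw [hFc]
    by_contra hc
    push Not at hc
    have hp : p = 0 := by omega
    subst hp
    have : 9 * k + 1 ≤ k ^ 2 + k + 1 := by nlinarith
    omega

end tl
end Main

section Main
open Classical

variable {V W : Type*}

/-- neighbourhood of a set -/
noncomputable def NS [Fintype V] (T : SimpleGraph V) (Q : Finset V) : Finset V :=
  Finset.univ.filter (fun v => ∃ q ∈ Q, T.Adj q v)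

lemma mem_NS [Fintype V] {T : SimpleGraph V} {Q : Finset V} {v : V} : v ∈ NS T Q ↔ ∃ q ∈ Q, T.Adj q v := by
  simp [NS]

/-- partial embedding of `Q` and its neighbourhood -/
structure Good [Fintype V] (T : SimpleGraph V) (H : SimpleGraph W) (I R : Finset W) (Q : Finset V) (φ : V → W) :
    Prop where
  indep : ∀ f ∈ Q, ∀ g ∈ Q, ¬ T.Adj f g
  injQ : Set.InjOn φ Q
  injN : Set.InjOn φ (NS T Q)
  memR : ∀ q ∈ Q, φ q ∈ R
  memI : ∀ x ∈ NS T Q, φ x ∈ I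
  adj : ∀ q ∈ Q, ∀ x, T.Adj q x → H.Adj (φ q) (φ x)

section good
variable [Fintype V] {T : SimpleGraph V} {H G : SimpleGraph W} {I R : Finset W}

lemma Good.contains {Q : Finset V} {φ : V → W} (h : Good T H I R Q φ) (hI : Clq H I) (hd : Disjoint I R)
    (hc : Fintype.card V ≤ I.card + Q.card) : Contains H T := by
  have hsub : NS T Q ⊆ Finset.univ \ Q := by
    intro x hx
    obtain ⟨q, hq, hqx⟩ := mem_NS.1 hx
    rw [Finset.mem_sdiff]
    exact ⟨Finset.mem_univ _, fun hxQ => h.indep q hq x hxQ hqx⟩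
  obtain ⟨ψ, h1, h2, h3⟩ := ext_inj (Finset.univ \ Q) (NS T Q) I φ hsub h.injN h.memI (by
    rw [Finset.card_sdiff_of_subset (Finset.subset_univ _), Finset.card_univ]; omega)
  have mem' : ∀ x, x ∉ Q → x ∈ Finset.univ \ Q := fun x hx => by simp [hx]
  have hd' := Finset.disjoint_left.1 hd
  let f : V → W := fun x => if x ∈ Q then φ x else ψ x
  have f1 : ∀ x ∈ Q, f x = φ x := fun x hx => by simp [f, hx]
  have f2 : ∀ x, x ∉ Q → f x = ψ x := fun x hx => by simp [f, hx]
  have finj : Function.Injective f := by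
    intro x y hxy
    by_cases hx : x ∈ Q <;> by_cases hy : y ∈ Q
    · rw [f1 x hx, f1 y hy] at hxy; exact h.injQ hx hy hxy
    · rw [f1 x hx, f2 y hy] at hxy
      exact absurd (hxy ▸ h.memR x hx) (hd' (h3 y (mem' y hy)))
    · rw [f2 x hx, f1 y hy] at hxy
      exact absurd (hxy ▸ h.memR y hy) (hd' (h3 x (mem' x hx)))
    · rw [f2 x hx, f2 y hy] at hxy; exact h2 (mem' x hx) (mem' y hy) hxy
  refine ⟨f, finj, ?_⟩
  have key : ∀ x ∈ Q, ∀ y, T.Adj x y → H.Adj (f x) (f y) := by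
    intro x hx y hxy
    rw [f1 x hx, f2 y (fun hy => h.indep x hx y hy hxy), h1 y (mem_NS.2 ⟨x, hx, hxy⟩)]
    exact h.adj x hx y hxy
  intro x y hxy
  by_cases hx : x ∈ Q
  · exact key x hx y hxy
  by_cases hy : y ∈ Q
  · exact (key y hy x hxy.symm).symm
  have hne : f x ≠ f y := fun e => hxy.ne (finj e)
  rw [f2 x hx, f2 y hy] at *
  exact hI _ (h3 x (mem' x hx)) _ (h3 y (mem' y hy)) hne

lemma Good.step {Q : Finset V} {φ : V → W} (h : Good T H I R Q φ) {f : V} {z : W} (g : V → W)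
    (hf : f ∉ Q) (hind : ∀ q ∈ Q, ¬ T.Adj q f) (hz : z ∈ R) (hzQ : ∀ q ∈ Q, φ q ≠ z)
    (hgI : ∀ x, T.Adj f x → g x ∈ I) (hgz : ∀ x, T.Adj f x → H.Adj z (g x))
    (hgQ : ∀ x, T.Adj f x → ∀ q ∈ Q, T.Adj q x → H.Adj (φ q) (g x))
    (hgN : ∀ x, T.Adj f x → ∀ y ∈ NS T Q, ¬ T.Adj f y → φ y ≠ g x)
    (hginj : ∀ x y, T.Adj f x → T.Adj f y → g x = g y → x = y) :
    ∃ φ', Good T H I R (insert f Q) φ' ∧ ∀ q ∈ Q, φ' q = φ q := by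
  let φ' : V → W := fun x => if x = f then z else if T.Adj f x then g x else φ x
  have ef : φ' f = z := by simp [φ']
  have eQ : ∀ q ∈ Q, φ' q = φ q := by
    intro q hq
    have h1 : q ≠ f := by rintro rfl; exact hf hq
    have h2 : ¬ T.Adj f q := fun h => hind q hq h.symm
    simp [φ', h1, h2]
  have eN : ∀ x, T.Adj f x → φ' x = g x := by
    intro x hx
    simp [φ', hx, hx.ne.symm]
  have eO : ∀ x ∈ NS T Q, ¬ T.Adj f x → φ' x = φ x := by
    intro x hx hfx
    have : x ≠ f := by
      rintro rfl
      obtain ⟨q, hq, hqx⟩ := mem_NS.1 hx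
      exact hind q hq hqx
    simp [φ', this, hfx]
  have hNS : ∀ x ∈ NS T (insert f Q), T.Adj f x ∨ (x ∈ NS T Q ∧ ¬ T.Adj f x) := by
    intro x hx
    obtain ⟨q, hq, hqx⟩ := mem_NS.1 hx
    by_cases hfx : T.Adj f x
    · exact Or.inl hfx
    · rcases Finset.mem_insert.1 hq with rfl | hq
      · exact absurd hqx hfx
      · exact Or.inr ⟨mem_NS.2 ⟨q, hq, hqx⟩, hfx⟩
  refine ⟨φ', ⟨?_, ?_, ?_, ?_, ?_, ?_⟩, eQ⟩
  · intro a ha b hb hab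
    rcases Finset.mem_insert.1 ha with ha1 | ha1 <;> rcases Finset.mem_insert.1 hb with hb1 | hb1
    · rw [ha1, hb1] at hab; exact absurd rfl hab.ne
    · rw [ha1] at hab; exact hind b hb1 hab.symm
    · rw [hb1] at hab; exact hind a ha1 hab
    · exact h.indep a ha1 b hb1 hab
  · intro a ha b hb hab
    rcases Finset.mem_insert.1 (Finset.mem_coe.1 ha) with ha1 | ha1 <;>
      rcases Finset.mem_insert.1 (Finset.mem_coe.1 hb) with hb1 | hb1
    · rw [ha1, hb1]
    · rw [ha1, ef, eQ b hb1] at hab; exact absurd hab.symm (hzQ b hb1)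
    · rw [hb1, ef, eQ a ha1] at hab; exact absurd hab (hzQ a ha1)
    · rw [eQ a ha1, eQ b hb1] at hab; exact h.injQ ha1 hb1 hab
  · intro a ha b hb hab
    rcases hNS a ha with ha1 | ha1 <;> rcases hNS b hb with hb1 | hb1
    · rw [eN a ha1, eN b hb1] at hab; exact hginj a b ha1 hb1 hab
    · rw [eN a ha1, eO b hb1.1 hb1.2] at hab; exact absurd hab.symm (hgN a ha1 b hb1.1 hb1.2)
    · rw [eN b hb1, eO a ha1.1 ha1.2] at hab; exact absurd hab (hgN b hb1 a ha1.1 ha1.2)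
    · rw [eO a ha1.1 ha1.2, eO b hb1.1 hb1.2] at hab; exact h.injN ha1.1 hb1.1 hab
  · intro q hq
    rcases Finset.mem_insert.1 hq with rfl | hq
    · rw [ef]; exact hz
    · rw [eQ q hq]; exact h.memR q hq
  · intro x hx
    rcases hNS x hx with h1 | h1
    · rw [eN x h1]; exact hgI x h1
    · rw [eO x h1.1 h1.2]; exact h.memI x h1.1
  · intro q hq x hqx
    by_cases hfx : T.Adj f x
    · rw [eN x hfx]
      rcases Finset.mem_insert.1 hq with rfl | hq
      · rw [ef]; exact hgz x hfx
      · rw [eQ q hq]; exact hgQ x hfx q hq hqx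
    · rcases Finset.mem_insert.1 hq with rfl | hq
      · exact absurd hqx hfx
      · rw [eQ q hq, eO x (mem_NS.2 ⟨q, hq, hqx⟩) hfx]
        exact h.adj q hq x hqx

lemma TF.dg_le {k : ℕ} {u₁ : V} {L1 F : Finset V} (hF : TF T k u₁ L1 F) {f : V} (hf : f ∈ L1 ∪ F) :
    dg T f Finset.univ ≤ 2 := by
  have h1 : ∀ u, (∀ x, T.Adj f x ↔ x = u) → dg T f Finset.univ ≤ 2 := by
    intro u hu
    have : Finset.univ.filter (T.Adj f) ⊆ {u} := fun x hx => by
      simpa [hu] using hx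
    have := Finset.card_le_card this
    rw [Finset.card_singleton] at this
    exact this.trans (by norm_num)
  rcases Finset.mem_union.1 hf with h | h
  · exact h1 u₁ (hF.hL f h)
  · rcases hF.hF f h with ⟨u, -, hu, -⟩ | ⟨u, u', -, -, -, hu, -⟩
    · exact h1 u hu
    · have : Finset.univ.filter (T.Adj f) ⊆ {u, u'} := fun x hx => by
        simpa [hu] using hx
      exact (Finset.card_le_card this).trans Finset.card_le_two

lemma TF.card_NS {k : ℕ} {u₁ : V} {L1 F : Finset V} (hF : TF T k u₁ L1 F) {Q : Finset V} (hQ : Q ⊆ L1 ∪ F) :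
    (NS T Q).card ≤ 2 * Q.card := by
  have : NS T Q ⊆ Q.biUnion (fun q => Finset.univ.filter (T.Adj q)) := by
    intro v hv
    obtain ⟨q, hq, hqv⟩ := mem_NS.1 hv
    exact Finset.mem_biUnion.2 ⟨q, hq, by simpa using hqv⟩
  refine (Finset.card_le_card this).trans (Finset.card_biUnion_le.trans ?_)
  rw [mul_comm]
  exact Finset.sum_le_card_nsmul _ _ 2 (fun q hq => hF.dg_le (hQ hq))

/-- picking a vertex of `J` adjacent (in `H`) to all vertices in `S` -/
lemma common {A S : Finset W} {d : ℕ} (h : ∀ y ∈ S, A.card ≤ dg G y A + d) (hc : S.card * d < A.card) :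
    ∃ a ∈ A, ∀ y ∈ S, G.Adj y a := by
  by_contra hno
  push Not at hno
  have hsub : A ⊆ S.biUnion (fun y => A.filter (fun a => ¬ G.Adj y a)) := by
    intro a ha
    obtain ⟨y, hy, hya⟩ := hno a ha
    exact Finset.mem_biUnion.2 ⟨y, hy, Finset.mem_filter.2 ⟨ha, hya⟩⟩
  have h1 := (Finset.card_le_card hsub).trans Finset.card_biUnion_le
  have h2 : ∑ y ∈ S, (A.filter (fun a => ¬ G.Adj y a)).card ≤ S.card * d := by
    refine Finset.sum_le_card_nsmul _ _ d ?_
    intro y hy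
    have h3 := h y hy
    have h4 := Finset.card_filter_add_card_filter_not (s := A) (G.Adj y)
    unfold dg at h3
    omega
  omega

/-- bounded degree from a common dense neighbourhood -/
lemma deg_le_k [Fintype W] {k d : ℕ} {Y C : Finset W} {y : W} (hYC : Disjoint Y C)
    (hy : C.card ≤ dg G y C + d) (hY : ∀ b ∈ Y, C.card ≤ dg G b C + d) (hc : 2 * d + k + 1 ≤ C.card)
    (hM : ¬ HasM G (Finset.univ.filter (G.Adj y)) (k + 1)) : dg G y Y ≤ k := by
  by_contra hcon
  push Not at hcon
  obtain ⟨B, hB, hBc⟩ := Finset.exists_subset_card_eq (s := Y.filter (G.Adj y)) (n := k + 1) hcon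
  apply hM
  have hBm : ∀ b ∈ B, b ∈ Y ∧ G.Adj y b := fun b hb => by simpa using hB hb
  have hg := hasM_greedy (G := G) B (C.filter (G.Adj y)) ?_ ?_
  · rw [hBc] at hg
    refine hg.mono ?_
    intro x hx
    rcases Finset.mem_union.1 hx with hx | hx
    · simpa using (hBm x hx).2
    · simpa using (Finset.mem_filter.1 hx).2
  · rw [Finset.disjoint_left]
    intro x hx hx'
    exact Finset.disjoint_left.1 hYC (hBm x hx).1 (Finset.mem_filter.1 hx').1
  · intro b hb
    have h1 := hY b (hBm b hb).1
    have h2 : dg G b C ≤ ((C.filter (G.Adj y)).filter (G.Adj b)).card + (C.filter (fun x => ¬ G.Adj y x)).card := by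
      have h5 := Finset.card_filter_add_card_filter_not (s := C.filter (G.Adj b)) (G.Adj y)
      unfold dg
      rw [← h5, Finset.filter_comm (G.Adj b) (G.Adj y)]
      apply Nat.add_le_add_left
      exact Finset.card_le_card (Finset.filter_subset_filter _ (Finset.filter_subset _ _))
    have h4 := Finset.card_filter_add_card_filter_not (s := C) (G.Adj y)
    unfold dg at hy
    omega

/-- `N*` -/
lemma nstar {k : ℕ} (hk : 8 ≤ k) (hn : k ^ 2 + k + 1 ≤ Fintype.card V) {u₁ : V} {L1 F : Finset V}
    (hTF : TF T k u₁ L1 F) (hF2 : 2 ≤ F.card) (hGH : ∀ a b, a ≠ b → ¬ G.Adj a b → H.Adj a b)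
    {J Z : Finset W} (hJ : Clq H J) (hj : Fintype.card V ≤ J.card + 2 * k)
    (hd : Disjoint J Z) (hZ : Fintype.card V ≤ Z.card + J.card)
    (hdz : ∀ z ∈ Z, dg G z J ≤ k) : Contains H T := by
  have : Nonempty V := ⟨u₁⟩
  have h9 : 9 * k + 1 ≤ Fintype.card V := by nlinarith
  rcases le_total (Fintype.card V) J.card with hbig | hsmall
  · exact clique_contains hJ hbig
  obtain ⟨s, hs⟩ : ∃ s, s + J.card = Fintype.card V := ⟨Fintype.card V - J.card, by omega⟩
  obtain ⟨Z', hZ', hZc⟩ := Finset.exists_subset_card_eq (s := Z) (n := s) (by omega)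
  have hd' : Disjoint J Z' := hd.mono_right hZ'
  have hne : ∀ z ∈ Z', ∀ a ∈ J, z ≠ a := by
    intro z hz a ha e
    exact Finset.disjoint_left.1 hd' ha (e ▸ hz)
  obtain ⟨a₁, ha₁, hB₁⟩ : ∃ a ∈ J, dg G a Z' ≤ 2 := by
    by_contra hno
    push Not at hno
    have h1 := Finset.card_nsmul_le_sum J _ 3 hno
    rw [sum_dg_comm] at h1
    have h2 := Finset.sum_le_card_nsmul Z' (fun z => dg G z J) k (fun z hz => hdz z (hZ' hz))
    rw [smul_eq_mul] at h1 h2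
    have h3 : Z'.card * k ≤ 2 * k * k := Nat.mul_le_mul_right _ (by omega)
    nlinarith
  set A1 := Z'.filter (fun z => ¬ G.Adj a₁ z) with hA1
  have hA1c : s ≤ A1.card + 2 := by
    have := Finset.card_filter_add_card_filter_not (s := Z') (G.Adj a₁)
    unfold dg at hB₁
    rw [← hA1] at this
    omega
  obtain ⟨Q0, hQ0, hQ0c⟩ := Finset.exists_subset_card_eq (s := L1) (n := min L1.card A1.card) (min_le_left _ _)
  obtain ⟨θ, hθ1, hθ2, -⟩ := two_stage a₁ Q0 ∅ A1 ∅ (by simp) (by simp) (by simp) (by rw [hQ0c]; exact min_le_right _ _)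
  have hA1m : ∀ z ∈ A1, z ∈ Z' ∧ ¬ G.Adj a₁ z := fun z hz => by simpa [hA1] using hz
  have good0 : Good T H J Z' Q0 (fun x => if x ∈ Q0 then θ x else a₁) := by
    have hu₁ : u₁ ∉ Q0 := by
      intro h
      have := (hTF.hL u₁ (hQ0 h) u₁).2 rfl
      exact this.ne rfl
    have hNS0 : ∀ x ∈ NS T Q0, x = u₁ := by
      intro x hx
      obtain ⟨q, hq, hqx⟩ := mem_NS.1 hx
      exact (hTF.hL q (hQ0 hq) x).1 hqx
    refine ⟨?_, ?_, ?_, ?_, ?_, ?_⟩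
    · intro f hf g hg
      exact hTF.indep f (Finset.mem_union_left _ (hQ0 hf)) g (Finset.mem_union_left _ (hQ0 hg))
    · intro a ha b hb hab
      have ha' : a ∈ Q0 := ha
      have hb' : b ∈ Q0 := hb
      simp only [ha', hb', if_true] at hab
      exact hθ1 ha hb hab
    · intro a ha b hb _
      rw [hNS0 a ha, hNS0 b hb]
    · intro q hq
      simp only [hq, if_true]
      exact (hA1m _ (hθ2 q hq)).1
    · intro x hx
      rw [hNS0 x hx]
      simp only [hu₁, if_false]
      exact ha₁
    · intro q hq x hqx
      rw [(hTF.hL q (hQ0 hq) x).1 hqx]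
      simp only [hq, hu₁, if_true, if_false]
      have := hA1m _ (hθ2 q hq)
      exact hGH _ _ (hne _ this.1 _ ha₁) (fun h => this.2 h.symm)
  have hdis := Finset.disjoint_left.1 hTF.disj
  have ind : ∀ F' : Finset V, F' ⊆ F → Q0.card + F'.card ≤ s → ∃ φ, Good T H J Z' (Q0 ∪ F') φ := by
    intro F'
    induction F' using Finset.induction_on with
    | empty => intro _ _; exact ⟨_, by rw [Finset.union_empty]; exact good0⟩
    | insert f F' hfF' ih =>
      intro hsub hcard
      rw [Finset.card_insert_of_notMem hfF'] at hcard
      have hfF : f ∈ F := hsub (Finset.mem_insert_self _ _)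
      have hF'F : F' ⊆ F := fun x hx => hsub (Finset.mem_insert_of_mem hx)
      obtain ⟨φ, hφ⟩ := ih hF'F (by omega)
      have hQsub : Q0 ∪ F' ⊆ L1 ∪ F := Finset.union_subset_union hQ0 hF'F
      have hQc : (Q0 ∪ F').card = Q0.card + F'.card := by
        apply Finset.card_union_of_disjoint
        rw [Finset.disjoint_left]
        intro x hx hx'
        exact hdis (hQ0 hx) (hF'F hx')
      have hfQ : f ∉ Q0 ∪ F' := by
        intro h
        rcases Finset.mem_union.1 h with h | h
        · exact hdis (hQ0 h) hfF
        · exact hfF' h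
      have hfU : f ∈ L1 ∪ F := Finset.mem_union_right _ hfF
      have hind : ∀ q ∈ Q0 ∪ F', ¬ T.Adj q f := fun q hq => hTF.indep q (hQsub hq) f hfU
      have hNSc := hTF.card_NS hQsub
      obtain ⟨z, hz, hzQ⟩ : ∃ z ∈ Z', z ∉ (Q0 ∪ F').image φ := by
        by_contra hno
        push Not at hno
        have h1 := Finset.card_le_card hno
        have h2 := Finset.card_image_le (s := Q0 ∪ F') (f := φ)
        omega
      have hzQ' : ∀ q ∈ Q0 ∪ F', φ q ≠ z := fun q hq e => hzQ (Finset.mem_image.2 ⟨q, hq, e⟩)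
      set J' := J \ (NS T (Q0 ∪ F')).image φ with hJ'
      have hJ'c : J.card ≤ J'.card + 2 * (s - 1) := by
        have h1 := Finset.le_card_sdiff ((NS T (Q0 ∪ F')).image φ) J
        have h2 := Finset.card_image_le (s := NS T (Q0 ∪ F')) (f := φ)
        rw [← hJ'] at h1
        omega
      have hJ'm : ∀ a ∈ J', a ∈ J ∧ ∀ y ∈ NS T (Q0 ∪ F'), φ y ≠ a := by
        intro a ha
        rw [hJ', Finset.mem_sdiff] at ha
        exact ⟨ha.1, fun y hy e => ha.2 (Finset.mem_image.2 ⟨y, hy, e⟩)⟩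
      have hdH : ∀ z ∈ Z', J'.card ≤ dg H z J' + k := by
        intro z hz
        have h1 := hdz z (hZ' hz)
        have h2 : dg G z J' ≤ dg G z J := dg_mono Finset.sdiff_subset
        have h3 := Finset.card_filter_add_card_filter_not (s := J') (G.Adj z)
        have h4 : J'.filter (fun x => ¬ G.Adj z x) ⊆ J'.filter (H.Adj z) := by
          intro x hx
          rw [Finset.mem_filter] at hx ⊢
          exact ⟨hx.1, hGH _ _ (hne z hz x (hJ'm x hx.1).1) hx.2⟩
        have h5 := Finset.card_le_card h4
        unfold dg at *
        omega
      have hgoal : insert f (Q0 ∪ F') = Q0 ∪ insert f F' := by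
        rw [Finset.union_insert]
      rw [← hgoal]
      rcases hTF.hF f hfF with ⟨u, hu1, huf, hu2⟩ | ⟨u, u', huu', hu1, hu1', huf, huo⟩
      · -- leaf
        set E := F'.filter (T.Adj u) with hE
        have hEc : E.card ≤ 1 := by
          have hsub' : insert f E ⊆ F.filter (T.Adj u) := by
            intro x hx
            rcases Finset.mem_insert.1 hx with rfl | hx
            · exact Finset.mem_filter.2 ⟨hfF, ((huf u).2 rfl).symm⟩
            · have := Finset.mem_filter.1 hx
              exact Finset.mem_filter.2 ⟨hF'F this.1, this.2⟩
          have h1 := Finset.card_le_card hsub'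
          have h0 : f ∉ E := fun h => hfF' (Finset.mem_filter.1 h).1
          rw [Finset.card_insert_of_notMem h0] at h1
          unfold dg at hu2
          omega
        obtain ⟨a, ha, haS⟩ := common (G := H) (A := J') (S := insert z (E.image φ)) (d := k) (by
          intro y hy
          rcases Finset.mem_insert.1 hy with rfl | hy
          · exact hdH _ hz
          · obtain ⟨e, he, rfl⟩ := Finset.mem_image.1 hy
            exact hdH _ (hφ.memR e (Finset.mem_union_right _ (Finset.mem_filter.1 he).1))) (by
          have h1 := Finset.card_insert_le z (E.image φ)
          have h2 := Finset.card_image_le (s := E) (f := φ)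
          have h3 : (insert z (E.image φ)).card * k ≤ 2 * k := Nat.mul_le_mul_right _ (by omega)
          omega)
        obtain ⟨φ', hφ', -⟩ := hφ.step (f := f) (z := z) (fun _ => a) hfQ hind hz hzQ'
          (fun _ _ => (hJ'm a ha).1) (fun _ _ => haS z (Finset.mem_insert_self _ _))
          (by
            intro x hfx q hq hqx
            rw [(huf x).1 hfx] at hqx
            have hqF : q ∈ F' := by
              rcases Finset.mem_union.1 hq with h | h
              · exact absurd ((hTF.hL q (hQ0 h) u).1 hqx) hu1
              · exact h
            exact haS _ (Finset.mem_insert_of_mem (Finset.mem_image_of_mem _ (Finset.mem_filter.2 ⟨hqF, hqx.symm⟩))))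
          (fun x _ y hy _ => (hJ'm a ha).2 y hy)
          (fun x y hx hy _ => by rw [(huf x).1 hx, (huf y).1 hy])
        exact ⟨φ', hφ'⟩
      · have h2 : 1 < (J'.filter (H.Adj z)).card := by
          have := hdH z hz
          unfold dg at this
          omega
        obtain ⟨a, ha, a', ha', hne'⟩ := Finset.one_lt_card.1 h2
        rw [Finset.mem_filter] at ha ha'
        have hx' : ∀ x, T.Adj f x → x = u ∨ (x = u' ∧ x ≠ u) := by
          intro x hx
          rcases (huf x).1 hx with e | e
          · exact Or.inl e
          · exact Or.inr ⟨e, by rw [e]; exact huu'.symm⟩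
        have hno : ∀ x, T.Adj f x → ∀ q ∈ Q0 ∪ F', ¬ T.Adj q x := by
          intro x hx q hq hqx
          have : q = f := huo q (hQsub hq) (by
            rcases (huf x).1 hx with e | e
            · left; rw [← e]; exact hqx
            · right; rw [← e]; exact hqx)
          exact hfQ (this ▸ hq)
        obtain ⟨φ', hφ', -⟩ := hφ.step (f := f) (z := z) (fun x => if x = u then a else a') hfQ hind hz hzQ'
          (by
            intro x _
            by_cases hx : x = u
            · simp only [hx, if_true]; exact (hJ'm a ha.1).1
            · simp only [hx, if_false]; exact (hJ'm a' ha'.1).1)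
          (by
            intro x _
            by_cases hx : x = u
            · simp only [hx, if_true]; exact ha.2
            · simp only [hx, if_false]; exact ha'.2)
          (fun x hx q hq hqx => absurd hqx (hno x hx q hq))
          (by
            intro x _ y hy _
            by_cases hx : x = u
            · simp only [hx, if_true]; exact (hJ'm a ha.1).2 y hy
            · simp only [hx, if_false]; exact (hJ'm a' ha'.1).2 y hy)
          (by
            intro x y hx hy hxy
            rcases hx' x hx with e | ⟨e, e1⟩ <;> rcases hx' y hy with e' | ⟨e', e1'⟩
            · rw [e, e']
            · simp only [e, e1', if_true, if_false] at hxy; exact absurd hxy hne'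
            · simp only [e', e1, if_true, if_false] at hxy; exact absurd hxy.symm hne'
            · rw [e, e'])
        exact ⟨φ', hφ'⟩
  have hsz := hTF.size
  obtain ⟨F', hF', hF'c⟩ := Finset.exists_subset_card_eq (s := F) (n := s - Q0.card) (by
    rw [hQ0c]
    omega)
  have hA1s : A1.card ≤ s := by
    rw [← hZc]; exact Finset.card_filter_le _ _
  obtain ⟨φ, hφ⟩ := ind F' hF' (by omega)
  refine hφ.contains hJ hd' ?_
  rw [Finset.card_union_of_disjoint]
  · omega
  · rw [Finset.disjoint_left]
    intro x hx hx'
    exact hdis (hQ0 hx) (hF' hx')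

/-- `S0` -/
lemma szero [Fintype W] {k : ℕ} {u₁ : V} {L1 : Finset V} (hL : ∀ l ∈ L1, ∀ x, T.Adj l x ↔ x = u₁)
    (h3k : 3 * k ≤ L1.card) {I' : Finset W} (hI : Clq H I') {w : W}
    (h1 : Fintype.card V ≤ dg H w I' + 3 * k + 1) (h2 : Fintype.card V ≤ dg H w Finset.univ + 1) :
    Contains H T := by
  set X := I'.filter (H.Adj w) with hX
  set Y := (Finset.univ \ I').filter (H.Adj w) with hY
  have hXY : X.card + Y.card = dg H w Finset.univ := by
    have : (Finset.univ : Finset W) = I' ∪ (Finset.univ \ I') := by simp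
    rw [this, dg_union Finset.disjoint_sdiff]
    rfl
  have hXc : X.card = dg H w I' := rfl
  obtain ⟨A, hA, hAc⟩ := Finset.exists_subset_card_eq (s := L1) (n := min L1.card Y.card) (min_le_left _ _)
  have hu₁ : u₁ ∉ L1 := fun h => ((hL u₁ h u₁).2 rfl).ne rfl
  set B := (Finset.univ.erase u₁) \ A with hB
  have hBc : B.card + A.card + 1 = Fintype.card V := by
    have hs : A ⊆ Finset.univ.erase u₁ := fun x hx => by
      simp only [Finset.mem_erase, Finset.mem_univ, and_true]; rintro rfl; exact hu₁ (hA hx)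
    have h1 := Finset.card_sdiff_add_card_eq_card hs
    rw [Finset.card_erase_of_mem (Finset.mem_univ u₁), Finset.card_univ, ← hB] at h1
    have : 0 < Fintype.card V := Fintype.card_pos_iff.2 ⟨u₁⟩
    omega
  obtain ⟨ψ, hψ1, hψ2, -⟩ := two_stage w A ∅ Y ∅ (by simp) (by simp) (by simp) (by rw [hAc]; exact min_le_right _ _)
  obtain ⟨θ, hθ1, hθ2, -⟩ := two_stage w B ∅ X ∅ (by simp) (by simp) (by simp) (by omega)
  have eY : ∀ x ∈ A, ψ x ∉ I' ∧ H.Adj w (ψ x) := fun x hx => by simpa [hY] using hψ2 x hx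
  have eX : ∀ x ∈ B, θ x ∈ I' ∧ H.Adj w (θ x) := fun x hx => by simpa [hX] using hθ2 x hx
  have hcases : ∀ x, x = u₁ ∨ (x ≠ u₁ ∧ x ∈ A) ∨ (x ≠ u₁ ∧ x ∉ A ∧ x ∈ B) := by
    intro x
    by_cases h1 : x = u₁
    · exact Or.inl h1
    by_cases h2 : x ∈ A
    · exact Or.inr (Or.inl ⟨h1, h2⟩)
    · exact Or.inr (Or.inr ⟨h1, h2, by simp [hB, h1, h2]⟩)
  let f : V → W := fun x => if x = u₁ then w else if x ∈ A then ψ x else θ x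
  have fc : f u₁ = w := by simp [f]
  have fA : ∀ x, x ≠ u₁ → x ∈ A → f x = ψ x := fun x h1 h2 => by simp [f, h1, h2]
  have fB : ∀ x, x ≠ u₁ → x ∉ A → f x = θ x := fun x h1 h2 => by simp [f, h1, h2]
  have finj : Function.Injective f := by
    intro x y hxy
    rcases hcases x with e | ⟨h1, h2⟩ | ⟨h1, h2, h3⟩ <;>
      rcases hcases y with e' | ⟨g1, g2⟩ | ⟨g1, g2, g3⟩
    · rw [e, e']
    · rw [e, fc, fA y g1 g2] at hxy; exact absurd hxy (eY y g2).2.ne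
    · rw [e, fc, fB y g1 g2] at hxy; exact absurd hxy (eX y g3).2.ne
    · rw [e', fc, fA x h1 h2] at hxy; exact absurd hxy.symm (eY x h2).2.ne
    · rw [fA x h1 h2, fA y g1 g2] at hxy; exact hψ1 h2 g2 hxy
    · rw [fA x h1 h2, fB y g1 g2] at hxy
      exact absurd (hxy ▸ (eX y g3).1) (eY x h2).1
    · rw [e', fc, fB x h1 h2] at hxy; exact absurd hxy.symm (eX x h3).2.ne
    · rw [fB x h1 h2, fA y g1 g2] at hxy
      exact absurd (hxy ▸ (eX x h3).1) (eY y g2).1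
    · rw [fB x h1 h2, fB y g1 g2] at hxy; exact hθ1 h3 g3 hxy
  have fcadj : ∀ y, y ≠ u₁ → H.Adj w (f y) := by
    intro y hy
    rcases hcases y with e' | ⟨g1, g2⟩ | ⟨g1, g2, g3⟩
    · exact absurd e' hy
    · rw [fA y g1 g2]; exact (eY y g2).2
    · rw [fB y g1 g2]; exact (eX y g3).2
  refine ⟨f, finj, ?_⟩
  intro x y hxy
  have hne : f x ≠ f y := fun e => hxy.ne (finj e)
  by_cases hx : x = u₁
  · rw [hx, fc]; exact fcadj y (fun e => hxy.ne (hx.trans e.symm))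
  by_cases hy : y = u₁
  · rw [hy, fc]; exact (fcadj x hx).symm
  rcases hcases x with e | ⟨h1, h2⟩ | ⟨h1, h2, h3⟩
  · exact absurd e hx
  · exact absurd ((hL x (hA h2) y).1 hxy) hy
  · rcases hcases y with e' | ⟨g1, g2⟩ | ⟨g1, g2, g3⟩
    · exact absurd e' hy
    · exact absurd ((hL y (hA g2) x).1 hxy.symm) hx
    · rw [fB x h1 h2, fB y g1 g2] at *; exact hI _ (eX x h3).1 _ (eX y g3).1 hne

end good
end Main

section Main
open Classical

variable {V W : Type*}

section st
variable [Fintype V] {T : SimpleGraph V} {H G : SimpleGraph W} {I J : Finset W}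

lemma dgH_notMem (hH : H = Gᶜ) {w : W} {S : Finset W} (h : w ∉ S) : dg G w S + dg H w S = S.card := by
  subst hH; exact dg_compl_notMem h

lemma dgH_mem (hH : H = Gᶜ) {w : W} {S : Finset W} (h : w ∈ S) : dg G w S + dg H w S + 1 = S.card := by
  subst hH; exact dg_compl_mem h

lemma adjH (hH : H = Gᶜ) (a b : W) (h : a ≠ b) (h' : ¬ G.Adj a b) : H.Adj a b := by
  subst hH; exact ⟨h, h'⟩

lemma clq_of_indep (hH : H = Gᶜ) (h : ∀ a ∈ I, ∀ b ∈ I, ¬ G.Adj a b) : Clq H I :=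
  fun a ha b hb hne => adjH hH a b hne (h a ha b hb)

lemma clq_indep (hH : H = Gᶜ) (hI : Clq H I) : ∀ a ∈ I, ∀ b ∈ I, ¬ G.Adj a b := by
  intro a ha b hb hab
  have := hI a ha b hb hab.ne
  subst hH
  exact this.2 hab

lemma clq_dg (hH : H = Gᶜ) (hI : Clq H I) {a : W} (ha : a ∈ I) : dg G a I = 0 := by
  unfold dg
  rw [Finset.card_eq_zero, Finset.filter_eq_empty_iff]
  intro b hb
  exact clq_indep hH hI a ha b hb

lemma stageN [Fintype W] {k : ℕ} (hk : 8 ≤ k) (hn : k ^ 2 + k + 1 ≤ Fintype.card V) {u₁ : V} {L1 F : Finset V}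
    (hTF : TF T k u₁ L1 F) (hF2 : 2 ≤ F.card) (hH : H = Gᶜ) (hW : Fintype.card W + 1 = 2 * Fintype.card V)
    (hM : ∀ v, ¬ HasM G (Finset.univ.filter (G.Adj v)) (k + 1)) (hno : ¬ Contains H T)
    (hI : Clq H I) (hi : Fintype.card V ≤ I.card + 2 * k) : ∃ a ∈ I, Fintype.card V ≤ dg G a Finset.univ := by
  have : Nonempty V := ⟨u₁⟩
  have h9 : 9 * k + 1 ≤ Fintype.card V := by nlinarith
  have hlt : I.card < Fintype.card V := by
    by_contra h
    exact hno (clique_contains hI (by omega))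
  obtain ⟨s, hs⟩ : ∃ s, s + I.card = Fintype.card V := ⟨Fintype.card V - I.card, by omega⟩
  by_contra hcon
  push Not at hcon
  set R := (Finset.univ : Finset W) \ I with hR
  have hRc : R.card + 1 = Fintype.card V + s := by
    have := Finset.card_sdiff_add_card_eq_card (Finset.subset_univ I)
    rw [Finset.card_univ, ← hR] at this
    omega
  have hd : Disjoint I R := Finset.disjoint_sdiff
  have hneR : ∀ r ∈ R, ∀ a ∈ I, r ≠ a := fun r hr a ha e => Finset.disjoint_left.1 hd ha (e ▸ hr)
  have hLF : (L1 ∪ F).card = L1.card + F.card := Finset.card_union_of_disjoint hTF.disj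
  have hsz := hTF.size
  have key : ∀ q, q ≤ s → ∃ Q φ, Q ⊆ L1 ∪ F ∧ Q.card = q ∧ Good T H I R Q φ := by
    intro q
    induction q with
    | zero =>
      intro _
      obtain ⟨a, ha⟩ : I.Nonempty := Finset.card_pos.1 (by omega)
      refine ⟨∅, fun _ => a, by simp, by simp, ?_, ?_, ?_, ?_, ?_, ?_⟩ <;> simp [NS]
    | succ q ih =>
      intro hq
      obtain ⟨Q, φ, hQ, hQc, hφ⟩ := ih (by omega)
      obtain ⟨f, hf, hfQ⟩ : ∃ f ∈ L1 ∪ F, f ∉ Q := by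
        by_contra h
        push Not at h
        have := Finset.card_le_card h
        omega
      have hind : ∀ q ∈ Q, ¬ T.Adj q f := fun q hq => hTF.indep q (hQ hq) f hf
      have hNSc := hTF.card_NS hQ
      set I' := I \ (NS T Q).image φ with hI'
      have hI'c : I.card ≤ I'.card + 2 * q := by
        have h1 := Finset.le_card_sdiff ((NS T Q).image φ) I
        have h2 := Finset.card_image_le (s := NS T Q) (f := φ)
        rw [← hI'] at h1
        omega
      have hI'm : ∀ a ∈ I', a ∈ I ∧ ∀ y ∈ NS T Q, φ y ≠ a := by
        intro a ha
        rw [hI', Finset.mem_sdiff] at ha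
        exact ⟨ha.1, fun y hy e => ha.2 (Finset.mem_image.2 ⟨y, hy, e⟩)⟩
      set Y := R \ Q.image φ with hY
      have hYc : R.card ≤ Y.card + q := by
        have h1 := Finset.le_card_sdiff (Q.image φ) R
        have h2 := Finset.card_image_le (s := Q) (f := φ)
        rw [← hY] at h1
        omega
      have hYm : ∀ z ∈ Y, z ∈ R ∧ ∀ q ∈ Q, φ q ≠ z := by
        intro z hz
        rw [hY, Finset.mem_sdiff] at hz
        exact ⟨hz.1, fun q hq e => hz.2 (Finset.mem_image.2 ⟨q, hq, e⟩)⟩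
      have hfin : (∃ φ', Good T H I R (insert f Q) φ') → ∃ Q φ, Q ⊆ L1 ∪ F ∧ Q.card = q + 1 ∧ Good T H I R Q φ := by
        rintro ⟨φ', h⟩
        refine ⟨insert f Q, φ', Finset.insert_subset hf hQ, by rw [Finset.card_insert_of_notMem hfQ, hQc], h⟩
      apply hfin
      have leaf : ∀ u, (∀ x, T.Adj f x ↔ x = u) → ∃ φ', Good T H I R (insert f Q) φ' := by
        intro u hu
        obtain ⟨a, haI, ha1, ha2⟩ : ∃ a ∈ I, (u ∈ NS T Q → a = φ u) ∧ ∀ y ∈ NS T Q, y ≠ u → φ y ≠ a := by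
          by_cases huN : u ∈ NS T Q
          · exact ⟨φ u, hφ.memI u huN, fun _ => rfl, fun y hy hne e => hne (hφ.injN hy huN e)⟩
          · obtain ⟨a, ha⟩ : I'.Nonempty := Finset.card_pos.1 (by omega)
            exact ⟨a, (hI'm a ha).1, fun h => absurd h huN, fun y hy _ => (hI'm a ha).2 y hy⟩
        have hz : ∃ z ∈ Y, H.Adj z a := by
          by_contra hno'
          push Not at hno'
          have hsub : Y ⊆ Finset.univ.filter (G.Adj a) := by
            intro z hz
            rw [Finset.mem_filter]
            refine ⟨Finset.mem_univ _, ?_⟩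
            by_contra hza
            exact hno' z hz (adjH hH z a (hneR z (hYm z hz).1 a haI) (fun h => hza h.symm))
          have h1 := Finset.card_le_card hsub
          have h2 := hcon a haI
          unfold dg at h2
          omega
        obtain ⟨z, hz, hza⟩ := hz
        obtain ⟨φ', hφ', -⟩ := hφ.step (f := f) (z := z) (fun _ => a) hfQ hind (hYm z hz).1 (hYm z hz).2
          (fun _ _ => haI) (fun _ _ => hza)
          (by
            intro x hx q hq hqx
            rw [(hu x).1 hx] at hqx
            rw [ha1 (mem_NS.2 ⟨q, hq, hqx⟩)]
            exact hφ.adj q hq u hqx)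
          (by
            intro x hx y hy hfy
            exact ha2 y hy (fun e => hfy ((hu y).2 e)))
          (fun x y hx hy _ => by rw [(hu x).1 hx, (hu y).1 hy])
        exact ⟨φ', hφ'⟩
      rcases Finset.mem_union.1 hf with hfL | hfF
      · exact leaf u₁ (hTF.hL f hfL)
      rcases hTF.hF f hfF with ⟨u, -, hu, -⟩ | ⟨u, u', huu', hu1, hu1', huf, huo⟩
      · exact leaf u hu
      by_cases hz : ∃ z ∈ Y, 1 < (I'.filter (H.Adj z)).card
      · obtain ⟨z, hz, h2⟩ := hz
        obtain ⟨a, ha, a', ha', hne'⟩ := Finset.one_lt_card.1 h2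
        rw [Finset.mem_filter] at ha ha'
        have hx' : ∀ x, T.Adj f x → x = u ∨ (x = u' ∧ x ≠ u) := by
          intro x hx
          rcases (huf x).1 hx with e | e
          · exact Or.inl e
          · exact Or.inr ⟨e, by rw [e]; exact huu'.symm⟩
        have hnoN : ∀ x, T.Adj f x → ∀ q ∈ Q, ¬ T.Adj q x := by
          intro x hx q hq hqx
          have : q = f := huo q (hQ hq) (by
            rcases (huf x).1 hx with e | e
            · left; rw [← e]; exact hqx
            · right; rw [← e]; exact hqx)
          exact hfQ (this ▸ hq)
        obtain ⟨φ', hφ', -⟩ := hφ.step (f := f) (z := z) (fun x => if x = u then a else a') hfQ hind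
          (hYm z hz).1 (hYm z hz).2
          (by
            intro x _
            by_cases hx : x = u
            · simp only [hx, if_true]; exact (hI'm a ha.1).1
            · simp only [hx, if_false]; exact (hI'm a' ha'.1).1)
          (by
            intro x _
            by_cases hx : x = u
            · simp only [hx, if_true]; exact ha.2
            · simp only [hx, if_false]; exact ha'.2)
          (fun x hx q hq hqx => absurd hqx (hnoN x hx q hq))
          (by
            intro x _ y hy _
            by_cases hx : x = u
            · simp only [hx, if_true]; exact (hI'm a ha.1).2 y hy
            · simp only [hx, if_false]; exact (hI'm a' ha'.1).2 y hy)
          (by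
            intro x y hx hy hxy
            rcases hx' x hx with e | ⟨e, e1⟩ <;> rcases hx' y hy with e' | ⟨e', e1'⟩
            · rw [e, e']
            · simp only [e, e1', if_true, if_false] at hxy; exact absurd hxy hne'
            · simp only [e', e1, if_true, if_false] at hxy; exact absurd hxy.symm hne'
            · rw [e, e'])
        exact ⟨φ', hφ'⟩
      · exfalso
        push Not at hz
        have hYI : ∀ y ∈ Y, y ∉ I' := fun y hy hyI => hneR y (hYm y hy).1 y (hI'm y hyI).1 rfl
        have hdY : ∀ y ∈ Y, I'.card ≤ dg G y I' + 1 := by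
          intro y hy
          have h1 := hz y hy
          have h2 := dgH_notMem hH (hYI y hy)
          unfold dg at *
          omega
        have hYM : ¬ HasM G Y (k + 1) := by
          intro h
          obtain ⟨S', hS', hS'c, hS'M⟩ := h.sub
          obtain ⟨a, ha, haS⟩ := common (G := G) (A := I') (S := S') (d := 1) (fun y hy => hdY y (hS' hy)) (by omega)
          apply hM a
          refine hS'M.mono ?_
          intro y hy
          rw [Finset.mem_filter]
          exact ⟨Finset.mem_univ _, (haS y hy).symm⟩
        have hYk : ∀ y ∈ Y, dg G y Y ≤ k := by
          intro y hy
          refine deg_le_k (C := I') (d := 1) ?_ (hdY y hy) hdY (by omega) (hM y)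
          rw [Finset.disjoint_left]
          exact hYI
        obtain ⟨J, hJY, hJi, hJc⟩ := exists_indep hYM
        apply hno
        refine nstar hk hn hTF hF2 (adjH hH) (clq_of_indep hH hJi) (J := J) (Z := Y \ J) ?_ ?_ ?_ ?_
        · omega
        · exact Finset.disjoint_sdiff
        · rw [Finset.card_sdiff_add_card_eq_card hJY]; omega
        · intro z hz
          exact (dg_mono hJY).trans (hYk z (Finset.mem_sdiff.1 hz).1)
  obtain ⟨Q, φ, -, hQc, hφ⟩ := key s le_rfl
  exact hno (hφ.contains hI hd (by omega))

lemma hasM_of_inj (A : Finset W) (g : W → W) : Set.InjOn g A → (∀ a ∈ A, ∀ b ∈ A, g a ≠ b) →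
    (∀ a ∈ A, G.Adj a (g a)) → HasM G (A ∪ A.image g) A.card := by
  induction A using Finset.induction_on with
  | empty => intro _ _ _; trivial
  | insert a A ha ih =>
    intro hinj hne hadj
    rw [Finset.card_insert_of_notMem ha]
    refine ⟨a, by simp, g a, by simp, hadj a (by simp), ?_⟩
    refine (ih (hinj.mono (by simp)) (fun x hx y hy => hne x (by simp [hx]) y (by simp [hy]))
      (fun x hx => hadj x (by simp [hx]))).mono ?_
    intro x hx
    rw [Finset.mem_erase, Finset.mem_erase]
    rcases Finset.mem_union.1 hx with hx | hx
    · refine ⟨fun e => hne a (by simp) x (by simp [hx]) e.symm, fun e => ha (e ▸ hx), by simp [hx]⟩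
    · obtain ⟨b, hb, rfl⟩ := Finset.mem_image.1 hx
      refine ⟨fun e => ?_, fun e => hne b (by simp [hb]) a (by simp) e, ?_⟩
      · have := hinj (by simp [hb]) (by simp) e
        exact ha (this ▸ hb)
      · exact Finset.mem_union_right _ (Finset.mem_image_of_mem _ (by simp [hb]))

/-- deficiency version of the Hall theorem -/
lemma hall_def {A B : Finset W} (hAB : Disjoint A B) {k : ℕ} (hk : k + 1 ≤ A.card)
    (hM : ¬ HasM G (A ∪ B) (k + 1)) :
    ∃ S ⊆ A, (B.filter (fun b => ∃ a ∈ S, G.Adj a b)).card + A.card ≤ S.card + k := by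
  by_contra hcon
  push Not at hcon
  set d := A.card - (k + 1) with hd
  let t : A → Finset (W ⊕ Fin d) := fun a => (B.filter (G.Adj a)).disjSum Finset.univ
  have hall : ∀ s : Finset A, s.card ≤ (s.biUnion t).card := by
    intro s
    rcases s.eq_empty_or_nonempty with rfl | ⟨a0, ha0⟩
    · simp
    have hS := hcon (s.image Subtype.val) (by
      intro x hx
      obtain ⟨y, _, rfl⟩ := Finset.mem_image.1 hx
      exact y.2)
    rw [Finset.card_image_of_injective _ Subtype.val_injective] at hS
    have hsub : (B.filter (fun b => ∃ a ∈ s.image Subtype.val, G.Adj a b)).disjSum (Finset.univ : Finset (Fin d))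
        ⊆ s.biUnion t := by
      intro x hx
      rw [Finset.mem_biUnion]
      rcases x with x | x
      · rw [Finset.inl_mem_disjSum, Finset.mem_filter] at hx
        obtain ⟨hxB, a, ha, hax⟩ := hx
        obtain ⟨y, hy, rfl⟩ := Finset.mem_image.1 ha
        exact ⟨y, hy, Finset.inl_mem_disjSum.2 (Finset.mem_filter.2 ⟨hxB, hax⟩)⟩
      · exact ⟨a0, ha0, Finset.inr_mem_disjSum.2 (Finset.mem_univ _)⟩
    have h1 := Finset.card_le_card hsub
    rw [Finset.card_disjSum, Finset.card_univ, Fintype.card_fin] at h1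
    omega
  obtain ⟨f, hfinj, hft⟩ := (Finset.all_card_le_biUnion_card_iff_exists_injective t).1 hall
  -- those matched into B
  set A' : Finset A := Finset.univ.filter (fun a => ∃ b, f a = Sum.inl b) with hA'
  have hA'c : k + 1 ≤ A'.card := by
    have h1 := Finset.card_filter_add_card_filter_not (s := (Finset.univ : Finset A)) (fun a => ∃ b, f a = Sum.inl b)
    have h2 : (Finset.univ.filter (fun a : A => ¬ ∃ b, f a = Sum.inl b)).card ≤ d := by
      have : (Finset.univ.filter (fun a : A => ¬ ∃ b, f a = Sum.inl b)).image f ⊆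
          (Finset.univ : Finset (Fin d)).image Sum.inr := by
        intro x hx
        obtain ⟨a, ha, rfl⟩ := Finset.mem_image.1 hx
        have h3 := (Finset.mem_filter.1 ha).2
        rcases hfa : f a with b | i
        · exact absurd ⟨b, hfa⟩ h3
        · simp
      have h3 := Finset.card_le_card this
      rw [Finset.card_image_of_injective _ hfinj, Finset.card_image_of_injective _ Sum.inr_injective,
        Finset.card_univ, Fintype.card_fin] at h3
      exact h3
    rw [Finset.card_univ, Fintype.card_coe, ← hA'] at h1
    omega
  obtain ⟨A'', hA''sub, hA''c⟩ := Finset.exists_subset_card_eq hA'c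
  have hne : Nonempty W := by
    obtain ⟨x, hx⟩ : A.Nonempty := Finset.card_pos.1 (by omega)
    exact ⟨x⟩
  obtain ⟨w0⟩ := hne
  let g : W → W := fun x => if h : x ∈ A then (f ⟨x, h⟩).elim id (fun _ => w0) else w0
  have hg : ∀ a : A, a ∈ A'' → f a = Sum.inl (g a) := by
    intro a ha
    obtain ⟨b, hb⟩ := (Finset.mem_filter.1 (hA''sub ha)).2
    have : g a = b := by simp [g, hb]
    rw [this, hb]
  have hgB : ∀ a : A, a ∈ A'' → g a ∈ B ∧ G.Adj a (g a) := by
    intro a ha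
    have h1 := hft a
    rw [hg a ha] at h1
    have h2 := Finset.inl_mem_disjSum.1 h1
    exact Finset.mem_filter.1 h2
  have hfinal := hasM_of_inj (G := G) (A''.image Subtype.val) g ?_ ?_ ?_
  · rw [Finset.card_image_of_injective _ Subtype.val_injective, hA''c] at hfinal
    apply hM
    refine hfinal.mono ?_
    intro x hx
    rcases Finset.mem_union.1 hx with hx | hx
    · obtain ⟨a, _, rfl⟩ := Finset.mem_image.1 hx
      exact Finset.mem_union_left _ a.2
    · obtain ⟨y, hy, rfl⟩ := Finset.mem_image.1 hx
      obtain ⟨a, ha, rfl⟩ := Finset.mem_image.1 hy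
      exact Finset.mem_union_right _ (hgB a ha).1
  · intro x hx y hy hxy
    obtain ⟨a, ha, rfl⟩ := Finset.mem_image.1 (Finset.mem_coe.1 hx)
    obtain ⟨b, hb, rfl⟩ := Finset.mem_image.1 (Finset.mem_coe.1 hy)
    have : f a = f b := by rw [hg a ha, hg b hb, hxy]
    rw [hfinj this]
  · intro x hx y hy hxy
    obtain ⟨a, ha, rfl⟩ := Finset.mem_image.1 hx
    obtain ⟨b, hb, rfl⟩ := Finset.mem_image.1 hy
    exact Finset.disjoint_left.1 hAB b.2 (hxy ▸ (hgB a ha).1)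
  · intro x hx
    obtain ⟨a, ha, rfl⟩ := Finset.mem_image.1 hx
    exact (hgB a ha).2

lemma c2 [Fintype W] {k n : ℕ} (hH : H = Gᶜ) (h9 : 9 * k + 1 ≤ n) (hIJ : Disjoint I J)
    (hI : Clq H I) (hJ : Clq H J) (hi : n ≤ I.card + 2 * k) (hj : n ≤ J.card + 2 * k)
    (hC : ∀ w, dg H w (I ∪ J) + 2 ≤ n) {z : W} (hM : ¬ HasM G (Finset.univ.filter (G.Adj z)) (k + 1))
    (hzI : z ∉ I) (hzJ : z ∉ J) : dg G z I ≤ k ∨ dg G z J ≤ k := by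
  by_contra hcon
  push Not at hcon
  set A := I.filter (G.Adj z) with hA
  set B := J.filter (G.Adj z) with hB
  have hAc : A.card = dg G z I := rfl
  have hBc : B.card = dg G z J := rfl
  have hAI : A ⊆ I := Finset.filter_subset _ _
  have hBJ : B ⊆ J := Finset.filter_subset _ _
  have hdj := Finset.disjoint_left.1 hIJ
  obtain ⟨S, hSA, hS⟩ := hall_def (G := G) (A := A) (B := B) (k := k) (hIJ.mono hAI hBJ) (by omega) (by
    intro h
    apply hM
    refine h.mono ?_
    intro x hx
    rw [Finset.mem_filter]
    refine ⟨Finset.mem_univ _, ?_⟩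
    rcases Finset.mem_union.1 hx with hx | hx
    · exact (Finset.mem_filter.1 hx).2
    · exact (Finset.mem_filter.1 hx).2)
  set NSB := B.filter (fun b => ∃ a ∈ S, G.Adj a b) with hNSB
  have hSc := Finset.card_le_card hSA
  have hsplit := Finset.card_filter_add_card_filter_not (s := B) (fun b => ∃ a ∈ S, G.Adj a b)
  rw [← hNSB] at hsplit
  obtain ⟨b, hb⟩ : (B.filter (fun b => ¬ ∃ a ∈ S, G.Adj a b)).Nonempty := Finset.card_pos.1 (by omega)
  rw [Finset.mem_filter] at hb
  push Not at hb
  obtain ⟨a, ha⟩ : S.Nonempty := Finset.card_pos.1 (by omega)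
  have haI := hAI (hSA ha)
  have hbJ := hBJ hb.1
  -- b is H-adjacent to S
  have hb1 : S.card ≤ dg H b I := by
    apply Finset.card_le_card
    intro x hx
    have hxI := hAI (hSA hx)
    rw [Finset.mem_filter]
    refine ⟨hxI, adjH hH b x (fun e => hdj hxI (e ▸ hbJ)) (fun h => hb.2 x hx h.symm)⟩
  have ha1 : (B.filter (fun b => ¬ ∃ a ∈ S, G.Adj a b)).card ≤ dg H a J := by
    apply Finset.card_le_card
    intro x hx
    rw [Finset.mem_filter] at hx ⊢
    have hxJ := hBJ hx.1
    exact ⟨hxJ, adjH hH a x (fun e => hdj haI (e ▸ hxJ)) (fun h => hx.2 ⟨a, ha, h⟩)⟩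
  have e1 := hC a
  have e2 := hC b
  have e3 := hC z
  rw [dg_union hIJ] at e1 e2 e3
  have f1 := dgH_mem hH haI
  have f2 := dgH_mem hH hbJ
  rw [clq_dg hH hI haI] at f1
  rw [clq_dg hH hJ hbJ] at f2
  have f3 := dgH_notMem hH hzI
  have f4 := dgH_notMem hH hzJ
  omega

lemma finish [Fintype W] {k : ℕ} (hk : 8 ≤ k) (hn : k ^ 2 + k + 1 ≤ Fintype.card V) {u₁ : V} {L1 F : Finset V}
    (hTF : TF T k u₁ L1 F) (hH : H = Gᶜ) (hW : Fintype.card W + 1 = 2 * Fintype.card V)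
    (hM : ∀ v, ¬ HasM G (Finset.univ.filter (G.Adj v)) (k + 1)) (hno : ¬ Contains H T)
    (hI : Clq H I) (hJ : Clq H J) (hi : Fintype.card V ≤ I.card + 2 * k) (hj : Fintype.card V ≤ J.card + 2 * k)
    {X Y : Finset W} (hXY : Disjoint X Y) (hXYu : X ∪ Y = Finset.univ) (hIX : I ⊆ X) (hJY : J ⊆ Y)
    (hX : ∀ x ∈ X, dg G x I ≤ k) (hY : ∀ y ∈ Y, dg G y J ≤ k) (hXc : Fintype.card V ≤ X.card)
    (hC : ∀ w, dg H w (I ∪ J) + 2 ≤ Fintype.card V) : False := by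
  have h9 : 9 * k + 1 ≤ Fintype.card V := by nlinarith
  have hdj := Finset.disjoint_left.1 hXY
  rcases hTF.alt with h3k | hF2
  swap
  · apply hno
    refine nstar hk hn hTF hF2 (adjH hH) hI (J := I) (Z := X \ I) hi Finset.disjoint_sdiff ?_ ?_
    · rw [Finset.card_sdiff_add_card_eq_card hIX]; exact hXc
    · intro z hz
      exact hX z (Finset.mem_sdiff.1 hz).1
  have hIJ : Disjoint I J := hXY.mono hIX hJY
  have hC' : ∀ w, dg H w I + dg H w J + 2 ≤ Fintype.card V := fun w => by
    have := hC w
    rwa [dg_union hIJ] at this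
  have hXI : ∀ x ∈ X, I.card ≤ dg H x I + k := by
    intro x hx
    by_cases hxI : x ∈ I
    · have f1 := dgH_mem hH hxI
      rw [clq_dg hH hI hxI] at f1
      omega
    · have f1 := dgH_notMem hH hxI
      have := hX x hx
      omega
  have hYJ : ∀ y ∈ Y, J.card ≤ dg H y J + k := by
    intro x hx
    by_cases hxI : x ∈ J
    · have f1 := dgH_mem hH hxI
      rw [clq_dg hH hJ hxI] at f1
      omega
    · have f1 := dgH_notMem hH hxI
      have := hY x hx
      omega
  have hXJ : ∀ x ∈ X, J.card ≤ dg G x J + (3 * k - 2) := by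
    intro x hx
    have h1 := hXI x hx
    have h2 := hC' x
    have h3 := dgH_notMem hH (fun h => hdj hx (hJY h) : x ∉ J)
    omega
  have hYI : ∀ y ∈ Y, I.card ≤ dg G y I + (3 * k - 2) := by
    intro y hy
    have h1 := hYJ y hy
    have h2 := hC' y
    have h3 := dgH_notMem hH (fun h => hdj (hIX h) hy : y ∉ I)
    omega
  have hdeg : ∀ w, Fintype.card V ≤ dg G w Finset.univ := by
    intro w
    have h1 := dgH_mem hH (Finset.mem_univ w)
    rw [Finset.card_univ] at h1
    have h2 : ¬ (Fintype.card V ≤ dg H w Finset.univ + 1) := by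
      intro h
      apply hno
      have hw : w ∈ X ∪ Y := by rw [hXYu]; exact Finset.mem_univ _
      rcases Finset.mem_union.1 hw with hw | hw
      · have := hXI w hw
        exact szero hTF.hL h3k hI (by omega) h
      · have := hYJ w hw
        exact szero hTF.hL h3k hJ (by omega) h
    omega
  have hXk : ∀ x ∈ X, dg G x X ≤ k := fun x hx =>
    deg_le_k (C := J) (d := 3 * k - 2) (hXY.mono_right hJY) (hXJ x hx) hXJ (by omega) (hM x)
  have hYk : ∀ y ∈ Y, dg G y Y ≤ k := fun y hy =>
    deg_le_k (C := I) (d := 3 * k - 2) (hXY.symm.mono_right hIX) (hYI y hy) hYI (by omega) (hM y)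
  have hdsplit : ∀ w, dg G w Finset.univ = dg G w X + dg G w Y := fun w => by
    rw [← hXYu, dg_union hXY]
  have hcsplit : X.card + Y.card = Fintype.card W := by
    rw [← Finset.card_union_of_disjoint hXY, hXYu, Finset.card_univ]
  obtain ⟨y, hyJ⟩ : J.Nonempty := Finset.card_pos.1 (by omega)
  have hyY := hJY hyJ
  obtain ⟨g, hg⟩ : ∃ g, g = dg G y Y := ⟨_, rfl⟩
  have hgk : g ≤ k := by rw [hg]; exact hYk y hyY
  obtain ⟨e, he⟩ : ∃ e, X.card = Fintype.card V + e := ⟨X.card - Fintype.card V, by omega⟩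
  obtain ⟨q, hq⟩ : ∃ q, q + g = k := ⟨k - g, by omega⟩
  set Xy := X.filter (G.Adj y) with hXy
  have hXyc : Fintype.card V ≤ Xy.card + g := by
    have h1 := hdeg y
    rw [hdsplit, ← hg] at h1
    exact h1
  set Hy := X.filter (fun x => ¬ G.Adj y x) with hHy
  have hHyc : Hy.card ≤ g + e := by
    have h1 := Finset.card_filter_add_card_filter_not (s := X) (G.Adj y)
    rw [← hXy, ← hHy] at h1
    omega
  have hXyX : Xy ⊆ X := Finset.filter_subset _ _
  have hnM : ¬ HasM G Xy (q + 1) := by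
    intro h
    obtain ⟨S', hS', hS'c, hS'M⟩ := h.sub
    set B := Y.filter (G.Adj y) with hB
    have hBc : B.card = g := hg.symm
    have hyI : I.card + 1 ≤ dg G y I + 2 * k := by
      have h1 := dgH_mem hH hyJ
      rw [clq_dg hH hJ hyJ] at h1
      have h2 := hC' y
      have h3 := dgH_notMem hH (fun h => hdj (hIX h) hyY : y ∉ I)
      omega
    have hgr := hasM_greedy (G := G) B ((I.filter (G.Adj y)) \ S') ?_ ?_
    · have hun := HasM.union (S := S') (S' := B ∪ ((I.filter (G.Adj y)) \ S')) ?_ hS'M hgr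
      · rw [hBc, show q + 1 + g = k + 1 by omega] at hun
        apply hM y
        refine hun.mono ?_
        intro x hx
        rw [Finset.mem_filter]
        refine ⟨Finset.mem_univ _, ?_⟩
        rcases Finset.mem_union.1 hx with hx | hx
        · exact (Finset.mem_filter.1 (hS' hx)).2
        · rcases Finset.mem_union.1 hx with hx | hx
          · exact (Finset.mem_filter.1 hx).2
          · exact (Finset.mem_filter.1 (Finset.mem_sdiff.1 hx).1).2
      · rw [Finset.disjoint_left]
        intro x hx hx'
        rcases Finset.mem_union.1 hx' with hx' | hx'
        · exact hdj (hXyX (hS' hx)) (Finset.mem_filter.1 hx').1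
        · exact (Finset.mem_sdiff.1 hx').2 hx
    · rw [Finset.disjoint_left]
      intro x hx hx'
      exact hdj (hIX (Finset.mem_filter.1 (Finset.mem_sdiff.1 hx').1).1) (Finset.mem_filter.1 hx).1
    · intro b hb
      have hbY := (Finset.mem_filter.1 hb).1
      have h1 := hYI b hbY
      have hsub : I.filter (G.Adj b) ⊆ (((I.filter (G.Adj y)) \ S').filter (G.Adj b)) ∪
          ((I.filter (fun x => ¬ G.Adj y x)) ∪ S') := by
        intro x hx
        simp only [Finset.mem_union, Finset.mem_filter, Finset.mem_sdiff] at hx ⊢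
        tauto
      have h2 := Finset.card_le_card hsub
      have h3 := Finset.card_union_le (((I.filter (G.Adj y)) \ S').filter (G.Adj b))
        ((I.filter (fun x => ¬ G.Adj y x)) ∪ S')
      have h4 := Finset.card_union_le (I.filter (fun x => ¬ G.Adj y x)) S'
      have h5 := Finset.card_filter_add_card_filter_not (s := I) (G.Adj y)
      unfold dg at h1 hyI
      omega
  have hniso := noniso (G := G) (k := k) (S := Xy) (fun x hx => (dg_mono hXyX).trans (hXk x (hXyX hx))) hnM
  set Z := Xy.filter (fun x => ¬ ∃ y ∈ Xy, G.Adj x y) with hZ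
  have hZc : g * k + 1 ≤ Z.card := by
    have h1 := Finset.card_filter_add_card_filter_not (s := Xy) (fun x => ∃ y ∈ Xy, G.Adj x y)
    rw [← hZ] at h1
    have h2 : k ^ 2 + k = (k + 1) * q + g * k + g := by
      rw [← hq]; ring
    omega
  have hZd : ∀ x ∈ Z, 1 + e ≤ dg G x Hy := by
    intro x hx
    rw [hZ, Finset.mem_filter] at hx
    have h1 := hdeg x
    rw [hdsplit] at h1
    have h2 : dg G x Y ≤ Y.card := dg_le
    have h3 : dg G x X ≤ dg G x Hy := by
      apply Finset.card_le_card
      intro v hv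
      rw [Finset.mem_filter] at hv ⊢
      refine ⟨Finset.mem_filter.2 ⟨hv.1, fun hyv => hx.2 ⟨v, Finset.mem_filter.2 ⟨hv.1, hyv⟩, hv.2⟩⟩, hv.2⟩
    omega
  have hZX : Z ⊆ X := (Finset.filter_subset _ _).trans hXyX
  have hdc : Z.card * (1 + e) ≤ Hy.card * k := by
    have h1 := Finset.card_nsmul_le_sum Z _ _ hZd
    rw [sum_dg_comm] at h1
    exact h1.trans (Finset.sum_le_card_nsmul Hy _ k (fun v hv =>
      (dg_mono hZX).trans (hXk v (Finset.mem_filter.1 hv).1)))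
  obtain ⟨x, hx⟩ : Z.Nonempty := Finset.card_pos.1 (by omega)
  have hxe : 1 + e ≤ Hy.card := (hZd x hx).trans dg_le
  have hfin : (g * k + 1) * (1 + e) ≤ (g + e) * k :=
    (Nat.mul_le_mul_right _ hZc).trans (hdc.trans (Nat.mul_le_mul_right _ hHyc))
  have hg1 : 1 ≤ g := by omega
  have h5 : k * e ≤ g * (k * e) := Nat.le_mul_of_pos_left _ hg1
  nlinarith
end st
end Main

section Main
open Classical

variable {V W : Type*}

section fin
variable [Fintype V] {T : SimpleGraph V} {H G : SimpleGraph W} {I J : Finset W}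

lemma base_case [Fintype W] (hT : T.IsTree) {k : ℕ} (hk : 8 ≤ k) (hn : k ^ 2 + k + 1 ≤ Fintype.card V)
    (hH : H = Gᶜ) (hW : Fintype.card W + 1 = 2 * Fintype.card V)
    (hM : ∀ v, ¬ HasM G (Finset.univ.filter (G.Adj v)) (k + 1)) (hno : ¬ Contains H T) : False := by
  have h9 : 9 * k + 1 ≤ Fintype.card V := by nlinarith
  obtain ⟨u₁, L1, F, hTF⟩ := exists_TF hT hk hn
  have hWne : Nonempty W := Fintype.card_pos_iff.1 (by omega)
  have hdeg : ∀ w, dg G w Finset.univ + dg H w Finset.univ + 1 = Fintype.card W := by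
    intro w
    rw [dgH_mem hH (Finset.mem_univ w), Finset.card_univ]
  have getI : ∀ w, Fintype.card V ≤ dg G w Finset.univ → ∃ I : Finset W, (∀ x ∈ I, G.Adj w x) ∧ Clq H I ∧
      Fintype.card V ≤ I.card + 2 * k := by
    intro w hw
    obtain ⟨I, hIs, hIi, hIc⟩ := exists_indep (hM w)
    refine ⟨I, fun x hx => ?_, clq_of_indep hH hIi, ?_⟩
    · simpa using hIs hx
    · unfold dg at hw
      omega
  obtain ⟨w, hw⟩ : ∃ w, Fintype.card V ≤ dg G w Finset.univ := by
    by_contra hcon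
    push Not at hcon
    apply hno
    refine greedy_tree hT fun w => ?_
    have := hcon w
    have := hdeg w
    omega
  obtain ⟨I, -, hI, hi⟩ := getI w hw
  obtain ⟨a, haI, ha⟩ : ∃ a ∈ I, Fintype.card V ≤ dg G a Finset.univ := by
    rcases hTF.alt with h3k | hF2
    · obtain ⟨a, ha⟩ : I.Nonempty := Finset.card_pos.1 (by omega)
      refine ⟨a, ha, ?_⟩
      by_contra hlt
      apply hno
      have h1 := dgH_mem hH ha
      rw [clq_dg hH hI ha] at h1
      have h2 := hdeg a
      exact szero (k := k) hTF.hL h3k hI (w := a) (by omega) (by omega)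
    · exact stageN hk hn hTF hF2 hH hW hM hno hI hi
  obtain ⟨J, hJa, hJ, hj⟩ := getI a ha
  have hIJ : Disjoint I J := by
    rw [Finset.disjoint_left]
    intro x hx hx'
    exact clq_indep hH hI a haI x hx (hJa x hx')
  have hC := lemC hT hI hJ hIJ (by omega) hi hj hno
  have hdj := Finset.disjoint_left.1 hIJ
  set X := Finset.univ.filter (fun w => w ∉ J ∧ dg G w I ≤ k) with hX
  set Y := Finset.univ \ X with hY
  have memX : ∀ w, w ∈ X ↔ w ∉ J ∧ dg G w I ≤ k := fun w => by simp [hX]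
  have memY : ∀ w, w ∈ Y ↔ w ∉ X := fun w => by simp [hY]
  have hXY : Disjoint X Y := Finset.disjoint_sdiff
  have hXYu : X ∪ Y = Finset.univ := by simp [hY]
  have hcard : X.card + Y.card = Fintype.card W := by
    rw [← Finset.card_union_of_disjoint hXY, hXYu, Finset.card_univ]
  have hIX : I ⊆ X := fun x hx => (memX x).2 ⟨hdj hx, by rw [clq_dg hH hI hx]; omega⟩
  have hJY : J ⊆ Y := fun x hx => (memY x).2 fun h => ((memX x).1 h).1 hx
  have hX1 : ∀ x ∈ X, dg G x I ≤ k := fun x hx => ((memX x).1 hx).2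
  have hY1 : ∀ y ∈ Y, dg G y J ≤ k := by
    intro y hy
    by_cases hyJ : y ∈ J
    · rw [clq_dg hH hJ hyJ]; omega
    · have hy' : ¬ dg G y I ≤ k := fun h => (memY y).1 hy ((memX y).2 ⟨hyJ, h⟩)
      have hyI : y ∉ I := fun h => hy' (by rw [clq_dg hH hI h]; omega)
      exact (c2 hH h9 hIJ hI hJ hi hj hC (hM y) hyI hyJ).resolve_left hy'
  by_cases hXc : Fintype.card V ≤ X.card
  · exact finish hk hn hTF hH hW hM hno hI hJ hi hj hXY hXYu hIX hJY hX1 hY1 hXc hC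
  · refine finish hk hn hTF hH hW hM hno hJ hI hj hi hXY.symm (by rw [Finset.union_comm]; exact hXYu)
      hJY hIX hY1 hX1 (by omega) ?_
    intro w
    rw [Finset.union_comm]
    exact hC w

end fin

lemma cjm_of {G : SimpleGraph W} {r m : ℕ} (f : Fin r ⊕ Fin m × Bool → W) (hf : Function.Injective f)
    (h1 : ∀ i y, Sum.inl i ≠ y → G.Adj (f (Sum.inl i)) (f y))
    (h2 : ∀ j, G.Adj (f (Sum.inr (j, true))) (f (Sum.inr (j, false)))) :
    Contains G (cliqueJoinMatching r m) := by
  refine ⟨f, hf, ?_⟩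
  intro u v huv
  rw [cliqueJoinMatching, SimpleGraph.fromRel_adj] at huv
  obtain ⟨hne, (⟨i, rfl⟩ | ⟨j, rfl, rfl⟩) | (⟨i, rfl⟩ | ⟨j, rfl, rfl⟩)⟩ := huv
  · exact h1 i v hne
  · exact h2 j
  · exact (h1 i u hne.symm).symm
  · exact (h2 j).symm

lemma cjm_to {G : SimpleGraph W} {r m : ℕ} (h : Contains G (cliqueJoinMatching r m)) :
    ∃ f : Fin r ⊕ Fin m × Bool → W, Function.Injective f ∧
    (∀ i y, Sum.inl i ≠ y → G.Adj (f (Sum.inl i)) (f y)) ∧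
    (∀ j, G.Adj (f (Sum.inr (j, true))) (f (Sum.inr (j, false)))) := by
  obtain ⟨f, hf, h⟩ := h
  refine ⟨f, hf, ?_, ?_⟩
  · intro i y hy
    apply h
    rw [cliqueJoinMatching, SimpleGraph.fromRel_adj]
    exact ⟨hy, Or.inl (Or.inl ⟨i, rfl⟩)⟩
  · intro j
    apply h
    rw [cliqueJoinMatching, SimpleGraph.fromRel_adj]
    exact ⟨by simp, Or.inl (Or.inr ⟨j, rfl, rfl⟩)⟩

/-- adding a vertex that dominates a copy -/
lemma cjm_succ {G : SimpleGraph W} {r m : ℕ} (v : W) (f : Fin r ⊕ Fin m × Bool → W) (hf : Function.Injective f)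
    (h1 : ∀ i y, Sum.inl i ≠ y → G.Adj (f (Sum.inl i)) (f y))
    (h2 : ∀ j, G.Adj (f (Sum.inr (j, true))) (f (Sum.inr (j, false))))
    (hv : ∀ x, G.Adj v (f x)) : Contains G (cliqueJoinMatching (r + 1) m) := by
  let g : Fin (r + 1) ⊕ Fin m × Bool → W :=
    Sum.elim (Fin.cases v (fun i => f (Sum.inl i))) (fun x => f (Sum.inr x))
  have g0 : g (Sum.inl 0) = v := rfl
  have gs : ∀ i : Fin r, g (Sum.inl i.succ) = f (Sum.inl i) := fun i => rfl
  have gr : ∀ x, g (Sum.inr x) = f (Sum.inr x) := fun i => rfl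
  have hsplit : ∀ y : Fin (r + 1) ⊕ Fin m × Bool, y = Sum.inl 0 ∨
      ∃ z : Fin r ⊕ Fin m × Bool, y = Sum.map Fin.succ id z ∧ g y = f z := by
    rintro (i | x)
    · refine Fin.cases (Or.inl rfl) (fun i => Or.inr ⟨Sum.inl i, rfl, rfl⟩) i
    · exact Or.inr ⟨Sum.inr x, rfl, rfl⟩
  refine cjm_of g ?_ ?_ ?_
  · intro a b hab
    rcases hsplit a with rfl | ⟨z, rfl, hz⟩ <;> rcases hsplit b with rfl | ⟨z', rfl, hz'⟩
    · rfl
    · rw [g0, hz'] at hab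
      exact absurd hab (hv z').ne
    · rw [g0, hz] at hab
      exact absurd hab.symm (hv z).ne
    · rw [hz, hz'] at hab
      rw [hf hab]
  · intro i y hy
    rcases hsplit y with rfl | ⟨z', rfl, hz'⟩
    · induction i using Fin.cases with
      | zero => exact absurd rfl hy
      | succ i => rw [g0, gs]; exact (hv _).symm
    · rw [hz']
      induction i using Fin.cases with
      | zero => rw [g0]; exact hv _
      | succ i =>
        rw [gs]
        refine h1 i z' ?_
        rintro rfl
        exact hy rfl
  · intro j
    rw [gr, gr]; exact h2 j

lemma contains_sub {U : Type*} {A : SimpleGraph U} {G : SimpleGraph W} {S : Finset W}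
    (h : Contains (G.comap (Subtype.val : {x // x ∈ S} → W)) A) : Contains G A := by
  obtain ⟨f, hf, h⟩ := h
  exact ⟨fun u => (f u).1, Subtype.val_injective.comp hf, fun u v huv => h huv⟩

lemma contains_sub_compl {U : Type*} {A : SimpleGraph U} {G : SimpleGraph W} {S : Finset W}
    (h : Contains (G.comap (Subtype.val : {x // x ∈ S} → W))ᶜ A) : Contains Gᶜ A := by
  obtain ⟨f, hf, h⟩ := h
  refine ⟨fun u => (f u).1, Subtype.val_injective.comp hf, fun u v huv => ?_⟩
  have := h huv
  rw [SimpleGraph.compl_adj] at this ⊢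
  exact ⟨fun h' => this.1 (Subtype.ext h'), this.2⟩

lemma base2 [Fintype V] {T : SimpleGraph V} (hT : T.IsTree) {k : ℕ} (hk : 8 ≤ k)
    (hn : k ^ 2 + k + 1 ≤ Fintype.card V) [Fintype W] (G : SimpleGraph W)
    (hW : Fintype.card W + 1 = 2 * Fintype.card V) :
    Contains G (cliqueJoinMatching 1 (k + 1)) ∨ Contains Gᶜ T := by
  by_contra hcon
  push Not at hcon
  refine base_case hT hk hn rfl hW ?_ hcon.2
  intro v hv
  obtain ⟨f, hf, hfS, hfa⟩ := hv.toFun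
  apply hcon.1
  refine cjm_succ (r := 0) v (fun x => Sum.elim (fun i => i.elim0) f x) ?_ ?_ ?_ ?_
  · rintro (i | a) (j | b) hab
    · exact i.elim0
    · exact i.elim0
    · exact j.elim0
    · rw [hf hab]
  · intro i
    exact i.elim0
  · exact hfa
  · rintro (i | x)
    · exact i.elim0
    · simpa using hfS x

universe u

lemma outer [Fintype V] {T : SimpleGraph V} (hT : T.IsTree) {k : ℕ} (hk : 8 ≤ k)
    (hn : k ^ 2 + k + 1 ≤ Fintype.card V) (r : ℕ) : ∀ (W : Type u) [Fintype W] (G : SimpleGraph W),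
    (r + 2) * (Fintype.card V - 1) + 1 ≤ Fintype.card W →
    Contains G (cliqueJoinMatching (r + 1) (k + 1)) ∨ Contains Gᶜ T := by
  induction r with
  | zero =>
    intro W _ G hW
    obtain ⟨S, -, hS⟩ := Finset.exists_subset_card_eq (s := (Finset.univ : Finset W))
      (n := (0 + 2) * (Fintype.card V - 1) + 1) (by rw [Finset.card_univ]; exact hW)
    have hc : Fintype.card {x // x ∈ S} = S.card := Fintype.card_coe S
    rcases base2 hT hk hn (G.comap (Subtype.val : {x // x ∈ S} → W)) (by omega) with h | h
    · exact Or.inl (contains_sub h)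
    · exact Or.inr (contains_sub_compl h)
  | succ r ih =>
    intro W _ G hW
    have hWne : Nonempty W := Fintype.card_pos_iff.1 (by omega)
    by_cases hd : ∀ w, Fintype.card V ≤ dg Gᶜ w Finset.univ + 1
    · exact Or.inr (greedy_tree hT hd)
    push Not at hd
    obtain ⟨v, hv⟩ := hd
    have h1 := dg_compl_mem (G := G) (Finset.mem_univ v)
    rw [Finset.card_univ] at h1
    set S := Finset.univ.filter (G.Adj v) with hS
    have hSc : S.card = dg G v Finset.univ := rfl
    have hc : Fintype.card {x // x ∈ S} = S.card := Fintype.card_coe S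
    have e : (r + 1 + 2) * (Fintype.card V - 1) = (r + 2) * (Fintype.card V - 1) + (Fintype.card V - 1) := by ring
    rcases ih {x // x ∈ S} (G.comap Subtype.val) (by omega) with h | h
    · obtain ⟨f, hf, f1, f2⟩ := cjm_to h
      refine Or.inl (cjm_succ v (fun x => (f x).1) (Subtype.val_injective.comp hf) (fun i y hy => f1 i y hy) f2 ?_)
      intro x
      exact (Finset.mem_filter.1 (f x).2).2
    · exact Or.inr (contains_sub_compl h)

end Main

/-- **Corollary (upper bound)**: for `ℓ ≥ 2`, `m ≥ 9` and `n ≥ m² - m + 1`, any graph `G`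
on `ℓ(n - 1) + 1` vertices contains `K_{ℓ-1} + mK_2` or its complement contains any given
tree on `n` vertices. -/
theorem ramsey_tree_cliqueJoinMatching_upper {V W : Type*} [Fintype V] [Fintype W]
    (l m n : ℕ) (hl : 2 ≤ l) (hm : 9 ≤ m) (hn : m ^ 2 - m + 1 ≤ n)
    (T : SimpleGraph V) (hT : T.IsTree) (hTcard : Fintype.card V = n)
    (G : SimpleGraph W) (hGcard : Fintype.card W = l * (n - 1) + 1) :
    Contains G (cliqueJoinMatching (l - 1) m) ∨ Contains Gᶜ T := by
  obtain ⟨r, rfl⟩ : ∃ r, l = r + 2 := ⟨l - 2, by omega⟩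
  obtain ⟨k, rfl⟩ : ∃ k, m = k + 1 := ⟨m - 1, by omega⟩
  subst hTcard
  have e : (k + 1) ^ 2 - (k + 1) = k ^ 2 + k := by
    have : (k + 1) ^ 2 = k ^ 2 + k + (k + 1) := by ring
    omega
  rw [e] at hn
  exact outer hT (by omega) hn r W G hGcard.ge
end

section
/- Let m ≥ 4 and n ≥ 4m − 4 be integers, let T be a tree on n vertices, and let G be a graph on 2n − 1 vertices that does not contain the fan F_m as a subgraph and whose complement does not contain T as a subgraph. Then the maximum degree of G satisfies Δ(G) ≤ n + m − 2. -/
/-- The fan `F_m = K_1 + mK_2`: a center vertex joined to `m` disjoint edges,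
so `m` triangles sharing exactly one common vertex; it has `2m + 1` vertices. -/
def fan (m : ℕ) : SimpleGraph (Unit ⊕ Fin m × Bool) :=
  SimpleGraph.fromRel (fun x y =>
    (∃ u, x = Sum.inl u) ∨ ∃ i : Fin m, x = Sum.inr (i, true) ∧ y = Sum.inr (i, false))

/-- A matching of size indexed by `ι` inside the set `A`. -/
def MatchIn {W : Type*} (G : SimpleGraph W) (A : Finset W) {ι : Type*} (f : ι × Bool → W) : Prop :=
  Function.Injective f ∧ (∀ p, f p ∈ A) ∧ ∀ i, G.Adj (f (i, true)) (f (i, false))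

lemma fan_of_match {W : Type*} (G : SimpleGraph W) (A : Finset W) (v : W)
    (hA : ∀ x ∈ A, G.Adj v x) {m : ℕ} (f : Fin m × Bool → W) (hf : MatchIn G A f) :
    Contains G (fan m) := by
  obtain ⟨hinj, hmem, hadj⟩ := hf
  refine ⟨Sum.elim (fun _ => v) f, ?_, ?_⟩
  · rintro (x | x) (y | y) h
    · rfl
    · exact absurd h (hA _ (hmem y)).ne
    · exact absurd h.symm (hA _ (hmem x)).ne
    · exact congrArg Sum.inr (hinj h)
  · rintro (x | x) (y | y) h
    · exact absurd rfl h.1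
    · exact hA _ (hmem y)
    · exact (hA _ (hmem x)).symm
    · obtain ⟨_, h | h⟩ := h
      · rcases h with ⟨u, hu⟩ | ⟨i, h1, h2⟩
        · cases hu
        · cases h1; cases h2; exact hadj i
      · rcases h with ⟨u, hu⟩ | ⟨i, h1, h2⟩
        · cases hu
        · cases h1; cases h2; exact (hadj i).symm

lemma match_succ {W : Type*} (G : SimpleGraph W) (A : Finset W) {k : ℕ}
    (g : Option (Fin k) × Bool → W) (hg : MatchIn G A g) :
    ∃ f : Fin (k + 1) × Bool → W, MatchIn G A f := by
  obtain ⟨hinj, hmem, hadj⟩ := hg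
  refine ⟨fun p => g (finSuccEquiv k p.1, p.2), ?_, fun p => hmem _, fun i => hadj _⟩
  rintro ⟨a, b⟩ ⟨c, d⟩ h
  have := hinj h
  simpa using this

lemma exists_max_match {W : Type*} (G : SimpleGraph W) (A : Finset W) (m : ℕ)
    (h : ¬ ∃ f : Fin m × Bool → W, MatchIn G A f) :
    ∃ k, k < m ∧ ∃ f : Fin k × Bool → W, MatchIn G A f ∧
      ∀ g : Option (Fin k) × Bool → W, ¬ MatchIn G A g := by
  induction m with
  | zero =>
    exact absurd ⟨fun p => p.1.elim0, fun p => p.1.elim0, fun p => p.1.elim0,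
      fun i => i.elim0⟩ h
  | succ m ih =>
    by_cases hm : ∃ f : Fin m × Bool → W, MatchIn G A f
    · obtain ⟨f, hf⟩ := hm
      exact ⟨m, by omega, f, hf, fun g hg => h (match_succ G A g hg)⟩
    · obtain ⟨k, hk, r⟩ := ih hm
      exact ⟨k, by omega, r⟩

lemma no_edge {W : Type*} (G : SimpleGraph W) (A : Finset W) {k : ℕ}
    (f : Fin k × Bool → W) (hf : MatchIn G A f)
    (hmax : ∀ g : Option (Fin k) × Bool → W, ¬ MatchIn G A g)
    (r s : W) (hr : r ∈ A) (hs : s ∈ A) (hr' : ∀ p, f p ≠ r) (hs' : ∀ p, f p ≠ s) :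
    ¬ G.Adj r s := by
  intro h
  obtain ⟨hinj, hmem, hadj⟩ := hf
  have hne := h.ne
  apply hmax (fun p => match p with
    | (some j, b) => f (j, b)
    | (none, true) => r
    | (none, false) => s)
  refine ⟨?_, ?_, ?_⟩
  · rintro ⟨_ | a, _ | _⟩ ⟨_ | c, _ | _⟩ h <;> simp only at h <;>
      first
      | rfl
      | exact absurd h hne
      | exact absurd h.symm hne
      | exact absurd h (hr' _)
      | exact absurd h (hs' _)
      | exact absurd h.symm (hr' _)
      | exact absurd h.symm (hs' _)
      | (have := hinj h; simpa using this)
  · rintro ⟨_ | a, _ | _⟩ <;> first | exact hmem _ | assumption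
  · rintro (_ | a)
    · exact h
    · exact hadj a

lemma no_aug {W : Type*} (G : SimpleGraph W) (A : Finset W) {k : ℕ}
    (f : Fin k × Bool → W) (hf : MatchIn G A f)
    (hmax : ∀ g : Option (Fin k) × Bool → W, ¬ MatchIn G A g)
    (r s : W) (hr : r ∈ A) (hs : s ∈ A) (hr' : ∀ p, f p ≠ r) (hs' : ∀ p, f p ≠ s)
    (i : Fin k) (h1 : G.Adj (f (i, true)) r) (h2 : G.Adj (f (i, false)) s) : r = s := by
  by_contra hne
  have hf' := hf
  obtain ⟨hinj, hmem, hadj⟩ := hf'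
  let f' : Fin k × Bool → W := fun p => if p = (i, false) then r else f p
  have hm' : MatchIn G A f' := by
    refine ⟨?_, ?_, ?_⟩
    · intro p q h
      simp only [f'] at h
      split_ifs at h with h3 h4 h4
      · rw [h3, h4]
      · exact absurd h.symm (hr' _)
      · exact absurd h (hr' _)
      · exact hinj h
    · intro p
      simp only [f']
      split_ifs
      · exact hr
      · exact hmem _
    · intro j
      simp only [f']
      by_cases hj : j = i
      · subst hj; simpa using h1
      · simpa [hj] using hadj j
  refine no_edge G A f' hm' hmax (f (i, false)) s (hmem _) hs ?_ ?_ h2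
  · intro p h
    simp only [f'] at h
    split_ifs at h with h3
    · exact hr' _ h.symm
    · exact h3 (hinj h)
  · intro p h
    simp only [f'] at h
    split_ifs at h with h3
    · exact hne h
    · exact hs' _ h

lemma no_aug' {W : Type*} (G : SimpleGraph W) (A : Finset W) {k : ℕ}
    (f : Fin k × Bool → W) (hf : MatchIn G A f)
    (hmax : ∀ g : Option (Fin k) × Bool → W, ¬ MatchIn G A g)
    (r s : W) (hr : r ∈ A) (hs : s ∈ A) (hr' : ∀ p, f p ≠ r) (hs' : ∀ p, f p ≠ s)
    (p q : Fin k × Bool) (hpq : p.1 = q.1) (hne : p ≠ q)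
    (h1 : G.Adj (f p) r) (h2 : G.Adj (f q) s) : r = s := by
  obtain ⟨i, b⟩ := p
  obtain ⟨j, c⟩ := q
  simp only at hpq
  subst hpq
  cases b <;> cases c
  · exact absurd rfl hne
  · exact (no_aug G A f hf hmax s r hs hr hs' hr' i h2 h1).symm
  · exact no_aug G A f hf hmax r s hr hs hr' hs' i h1 h2
  · exact absurd rfl hne

open Classical in
lemma structure_lemma {W : Type*} (G : SimpleGraph W) (A : Finset W) {k : ℕ}
    (f : Fin k × Bool → W) (hf : MatchIn G A f)
    (hmax : ∀ g : Option (Fin k) × Bool → W, ¬ MatchIn G A g) :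
    ∃ X I : Finset W, I ⊆ X ∧ A.card ≤ X.card + k ∧ A.card ≤ I.card + 3 * k ∧
      ∀ x ∈ I, ∀ y ∈ X, ¬ G.Adj x y := by
  have hf' := hf
  obtain ⟨hinj, hmem, hadj⟩ := hf'
  let R : Finset W := A.filter (fun r => ∀ p, f p ≠ r)
  have hR : ∀ r, r ∈ R ↔ r ∈ A ∧ ∀ p, f p ≠ r := fun r => by simp [R]
  let S : Finset (Fin k × Bool) := Finset.univ.filter
    (fun p => ∃ r ∈ R, ∃ s ∈ R, r ≠ s ∧ G.Adj (f p) r ∧ G.Adj (f p) s)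
  have hS : ∀ p, p ∈ S ↔ ∃ r ∈ R, ∃ s ∈ R, r ≠ s ∧ G.Adj (f p) r ∧ G.Adj (f p) s :=
    fun p => by simp [S]
  let B : Finset W := R.filter (fun r => ∃ p, p ∉ S ∧ G.Adj (f p) r)
  have hB : ∀ r, r ∈ B ↔ r ∈ R ∧ ∃ p, p ∉ S ∧ G.Adj (f p) r := fun r => by simp [B]
  have hScard : S.card ≤ k := by
    have : S.card ≤ (Finset.univ : Finset (Fin k)).card := by
      apply Finset.card_le_card_of_injOn Prod.fst (fun _ _ => Finset.mem_coe.2 (Finset.mem_univ _))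
      intro p hp q hq hpq
      by_contra hne
      obtain ⟨r, hr, s, hs, hrs, h1, h2⟩ := (hS p).1 hp
      obtain ⟨t, ht, -, -, -, h3, -⟩ := (hS q).1 hq
      rw [hR] at hr hs ht
      have e1 := no_aug' G A f hf hmax r t hr.1 ht.1 hr.2 ht.2 p q hpq hne h1 h3
      have e2 := no_aug' G A f hf hmax s t hs.1 ht.1 hs.2 ht.2 p q hpq hne h2 h3
      exact hrs (e1.trans e2.symm)
    simpa using this
  have hBcard : B.card ≤ k := by
    have hc : ∀ r : B, ∃ p : Fin k × Bool, p ∉ S ∧ G.Adj (f p) r :=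
      fun r => ((hB r).1 r.2).2
    choose c hc using hc
    have : Fintype.card B ≤ Fintype.card (Fin k) := by
      apply Fintype.card_le_of_injective (fun r => (c r).1)
      rintro ⟨r, hr⟩ ⟨s, hs⟩ hrs
      obtain ⟨h1, h2⟩ := hc ⟨r, hr⟩
      obtain ⟨h3, h4⟩ := hc ⟨s, hs⟩
      apply Subtype.ext
      change r = s
      change G.Adj _ r at h2
      change G.Adj _ s at h4
      have hr' := ((hB r).1 hr).1
      have hs' := ((hB s).1 hs).1
      have hr'' := (hR r).1 hr'
      have hs'' := (hR s).1 hs'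
      by_cases hne : c ⟨r, hr⟩ = c ⟨s, hs⟩
      · by_contra hrs
        exact h1 ((hS _).2 ⟨r, hr', s, hs', hrs, h2, hne ▸ h4⟩)
      · exact no_aug' G A f hf hmax r s hr''.1 hs''.1 hr''.2 hs''.2 _ _ hrs hne h2 h4
    simpa using this
  have hRcard : A.card ≤ R.card + 2 * k := by
    have : A ⊆ R ∪ Finset.univ.image f := by
      intro a ha
      by_cases h : ∀ p, f p ≠ a
      · exact Finset.mem_union_left _ ((hR a).2 ⟨ha, h⟩)
      · push Not at h
        obtain ⟨p, hp⟩ := h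
        exact Finset.mem_union_right _ (Finset.mem_image.2 ⟨p, Finset.mem_univ _, hp⟩)
    have h1 := Finset.card_le_card this
    have h2 := Finset.card_union_le R (Finset.univ.image f)
    have h3 : (Finset.univ.image f).card ≤ (Finset.univ : Finset (Fin k × Bool)).card :=
      Finset.card_image_le
    simp at h3
    omega
  refine ⟨A \ S.image f, R \ B, ?_, ?_, ?_, ?_⟩
  · intro r hr
    have hr := (Finset.mem_sdiff.1 hr).1
    have := (hR r).1 hr
    refine Finset.mem_sdiff.2 ⟨this.1, fun h => ?_⟩
    obtain ⟨p, -, hp⟩ := Finset.mem_image.1 h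
    exact this.2 p hp
  · have h1 := Finset.le_card_sdiff (S.image f) A
    have h2 : (S.image f).card ≤ S.card := Finset.card_image_le
    omega
  · have h1 := Finset.le_card_sdiff B R
    omega
  · intro x hx y hy hxy
    obtain ⟨hx1, hx2⟩ := Finset.mem_sdiff.1 hx
    obtain ⟨hy1, hy2⟩ := Finset.mem_sdiff.1 hy
    have hx3 := (hR x).1 hx1
    by_cases h : ∀ p, f p ≠ y
    · exact no_edge G A f hf hmax x y hx3.1 hy1 hx3.2 h hxy
    · push Not at h
      obtain ⟨p, rfl⟩ := h
      refine hx2 ((hB x).2 ⟨hx1, p, fun hp => hy2 (Finset.mem_image_of_mem f hp), hxy.symm⟩)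

open Classical in
lemma embed_lemma {V W : Type*} [Fintype V] (G : SimpleGraph W) (T : SimpleGraph V)
    (c : V → Bool) (hc : ∀ u v, T.Adj u v → c u ≠ c v) (X I : Finset W) (hIX : I ⊆ X)
    (hX : Fintype.card V ≤ X.card) (hI : Fintype.card V ≤ 2 * I.card)
    (hG : ∀ x ∈ I, ∀ y ∈ X, ¬ G.Adj x y) : Contains Gᶜ T := by
  have hsum := Finset.card_filter_add_card_filter_not (s := (Finset.univ : Finset V))
    (fun v => c v = true)
  rw [Finset.card_univ] at hsum
  have key : ∃ b : Bool, (Finset.univ.filter (fun v => c v = b)).card ≤ I.card := by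
    by_contra h
    push Not at h
    have h1 := h true
    have h2 := h false
    simp only [Bool.not_eq_true] at hsum
    omega
  obtain ⟨b, hb⟩ := key
  obtain ⟨Y, hYI, hYc⟩ := Finset.exists_subset_card_eq hb
  have hsum2 := Finset.card_filter_add_card_filter_not (s := (Finset.univ : Finset V))
    (fun v => c v = b)
  rw [Finset.card_univ] at hsum2
  have hZ : (Finset.univ.filter (fun v => ¬ c v = b)).card ≤ (X \ Y).card := by
    have := Finset.card_sdiff_of_subset (hYI.trans hIX)
    omega
  have e1 : Nonempty ({v // c v = b} ↪ Y) := by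
    apply Function.Embedding.nonempty_of_card_le
    rw [Fintype.card_subtype]
    simp [hYc]
  have e2 : Nonempty ({v // ¬ c v = b} ↪ (X \ Y : Finset W)) := by
    apply Function.Embedding.nonempty_of_card_le
    rw [Fintype.card_subtype, Fintype.card_coe]
    exact hZ
  obtain ⟨e1⟩ := e1
  obtain ⟨e2⟩ := e2
  let f : V → W := fun v => if h : c v = b then e1 ⟨v, h⟩ else e2 ⟨v, h⟩
  have f1 : ∀ v, c v = b → f v ∈ Y := fun v h => by
    simp only [f, dif_pos h]; exact (e1 _).2
  have f2 : ∀ v, ¬ c v = b → f v ∈ X \ Y := fun v h => by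
    simp only [f, dif_neg h]; exact (e2 _).2
  have fX : ∀ v, f v ∈ X := fun v => by
    by_cases h : c v = b
    · exact hIX (hYI (f1 v h))
    · exact (Finset.mem_sdiff.1 (f2 v h)).1
  have finj : Function.Injective f := by
    intro u v huv
    by_cases hu : c u = b <;> by_cases hv : c v = b
    · simp only [f, dif_pos hu, dif_pos hv] at huv
      have := e1.injective (Subtype.ext huv)
      simpa using this
    · exact absurd (huv ▸ f1 u hu) (Finset.mem_sdiff.1 (f2 v hv)).2
    · exact absurd (huv ▸ f1 v hv) (Finset.mem_sdiff.1 (f2 u hu)).2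
    · simp only [f, dif_neg hu, dif_neg hv] at huv
      have := e2.injective (Subtype.ext huv)
      simpa using this
  refine ⟨f, finj, fun u v huv => ?_⟩
  rw [SimpleGraph.compl_adj]
  refine ⟨fun h => huv.ne (finj h), fun h => ?_⟩
  by_cases hu : c u = b
  · exact hG _ (hYI (f1 u hu)) _ (fX v) h
  · have hv : c v = b := by
      have := hc u v huv
      revert hu this
      cases c u <;> cases c v <;> cases b <;> simp
    exact hG _ (hYI (f1 v hv)) _ (fX u) h.symm

/-- If `m ≥ 4`, `n ≥ 4m - 4`, `T` is a tree on `n` vertices and `G` is a graph on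
`2n - 1` vertices containing no `F_m` whose complement contains no `T`, then
`Δ(G) ≤ n + m - 2`. -/
theorem maxDegree_le_of_no_fan_no_tree {V W : Type*} [Fintype V] [Fintype W]
    (m n : ℕ) (hm : 4 ≤ m) (hn : 4 * m - 4 ≤ n)
    (T : SimpleGraph V) (hT : T.IsTree) (hTcard : Fintype.card V = n)
    (G : SimpleGraph W) [DecidableRel G.Adj] (hGcard : Fintype.card W = 2 * n - 1)
    (hnoF : ¬ Contains G (fan m)) (hnoT : ¬ Contains Gᶜ T) :
    G.maxDegree ≤ n + m - 2 := by
  classical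
  apply SimpleGraph.maxDegree_le_of_forall_degree_le
  intro v
  by_contra hdeg
  rw [← SimpleGraph.card_neighborFinset_eq_degree] at hdeg
  have hA : ∀ x ∈ G.neighborFinset v, G.Adj v x := fun x hx => by simpa using hx
  obtain ⟨k, hk, f, hf, hmax⟩ := exists_max_match G (G.neighborFinset v) m
    (fun ⟨f, hf⟩ => hnoF (fan_of_match G _ v hA f hf))
  obtain ⟨X, I, hIX, hX, hI, hG⟩ := structure_lemma G _ f hf hmax
  obtain ⟨c⟩ : T.Colorable 2 := hT.isAcyclic.colorable_two
  refine hnoT (embed_lemma G T (fun v => decide (c v = 0)) ?_ X I hIX (by omega) (by omega) hG)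
  intro u w huw h
  have := c.valid huw
  simp only [decide_eq_decide] at h
  omega
end
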